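/- arXiv:1502.03154 — 3 statements merged into one kernel-verified Lean document; each statement's English description precedes it below -/
import Mathlib

section
/- Let n ≥ 1 and let M be an n-manifold with boundary. Suppose A, B, C : Set M satisfy A ∪ B = Set.univ and A ∩ B = C, and each of A, B, C (with the subspace topology) is homeomorphic to Bⁿ. Then Int(Set.univ) = Int(A) ∪ Int(B), Int(A) ∩ Int(B) = Int(C), and each of Int(A), Int(B), Int(C) (with the subspace topology) is homeomorphic to ℝⁿ; in particular the manifold interior of M splits as a union of two copies of ℝⁿ meeting in a copy of ℝⁿ. -/
noncomputable section

/-- The closed half-space `Hⁿ = {y : ℝⁿ | y 0 ≥ 0}`. -/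
def HalfSpace {n : ℕ} (hn : 1 ≤ n) : Set (EuclideanSpace ℝ (Fin n)) :=
  {y | 0 ≤ y ⟨0, hn⟩}

/-- An `n`-manifold with boundary: every point has an open neighborhood homeomorphic
(as a subspace) to an open subset of the half-space `Hⁿ`.
(The Hausdorff condition is imposed separately via `T2Space`.) -/
def LocallyHalfSpace {n : ℕ} (hn : 1 ≤ n) (M : Type) [TopologicalSpace M] : Prop :=
  ∀ x : M, ∃ (U : Set M) (V : Set (HalfSpace hn)),
    x ∈ U ∧ IsOpen U ∧ IsOpen V ∧ Nonempty (↥U ≃ₜ ↥V)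

/-- The manifold interior of a subset `S` of `M`: points `x ∈ S` admitting `U` with
`x ∈ U ⊆ S`, `U` open in the subspace topology of `S`, and `U` homeomorphic to `ℝⁿ`. -/
def mInt (n : ℕ) {M : Type} [TopologicalSpace M] (S : Set M) : Set M :=
  {x | x ∈ S ∧ ∃ U : Set M, x ∈ U ∧ U ⊆ S ∧
    IsOpen (Subtype.val ⁻¹' U : Set S) ∧
    Nonempty (↥U ≃ₜ EuclideanSpace ℝ (Fin n))}


open Set Metric MeasureTheory Topology in
theorem br_vol {E : Type*} [NormedAddCommGroup E] [InnerProductSpace ℝ E] [FiniteDimensional ℝ E]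
    [MeasurableSpace E] [BorelSpace E]
    (R : ℝ) (g : E → E) (hg : ContDiff ℝ 1 g)
    (hS : ∀ x, ‖x‖ = R → g x = 0) :
    ∃ t0 > (0:ℝ), ∀ t, 0 < t → t < t0 →
      ∫ x in ball (0:E) R, (ContinuousLinearMap.id ℝ E + t • fderiv ℝ g x).det
        = (volume (ball (0:E) R)).toReal := by
  -- Lipschitz bound
  have hcD : Continuous (fderiv ℝ g) := hg.continuous_fderiv one_ne_zero
  obtain ⟨L, hL⟩ := (isCompact_closedBall (0:E) R).exists_bound_of_continuousOn hcD.continuousOn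
  obtain ⟨K, hK1, hK⟩ : ∃ K : ℝ, 1 ≤ K ∧ ∀ x ∈ closedBall (0:E) R, ‖fderiv ℝ g x‖ ≤ K :=
    ⟨max L 1, le_max_right _ _, fun x hx => (hL x hx).trans (le_max_left _ _)⟩
  have hlip : ∀ x ∈ closedBall (0:E) R, ∀ y ∈ closedBall (0:E) R,
      ‖g x - g y‖ ≤ K * ‖x - y‖ := by
    intro x hx y hy
    exact (convex_closedBall (0:E) R).norm_image_sub_le_of_norm_fderiv_le
      (fun z _ => (hg.differentiable one_ne_zero) z) hK hy hx
  classical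
  let gt : E → E := fun x => if ‖x‖ < R then g x else 0
  have hgt_in : ∀ x, ‖x‖ ≤ R → gt x = g x := by
    intro x hx
    by_cases h : ‖x‖ < R
    · simp [gt, h]
    · simp [gt, h, hS x (le_antisymm hx (not_lt.1 h))]
  have hgt_out : ∀ x, R ≤ ‖x‖ → gt x = 0 := fun x hx => by simp [gt, not_lt.2 hx]
  have hmix : ∀ x y, ‖x‖ < R → R < ‖y‖ → ‖gt x - gt y‖ ≤ 2 * K * ‖x - y‖ := by
    intro x y hx hy
    have hR : 0 ≤ R := (norm_nonneg x).trans hx.le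
    have hy0 : 0 < ‖y‖ := hR.trans_lt hy
    set z := (R / ‖y‖) • y with hz
    have hzn : ‖z‖ = R := by
      rw [hz, norm_smul, Real.norm_eq_abs, abs_of_nonneg (by positivity)]; field_simp
    have h1 : ‖z - y‖ ≤ ‖x - y‖ := by
      have : z - y = (R / ‖y‖ - 1) • y := by rw [hz, sub_smul, one_smul]
      rw [this, norm_smul, Real.norm_eq_abs, abs_of_nonpos (by
        rw [sub_nonpos, div_le_one hy0]; exact hy.le)]
      have : -(R / ‖y‖ - 1) * ‖y‖ = ‖y‖ - R := by field_simp; ring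
      rw [this]
      have := norm_sub_norm_le y x
      rw [norm_sub_rev] at this
      linarith
    have h2 : ‖x - z‖ ≤ 2 * ‖x - y‖ := by
      have := norm_sub_le_norm_sub_add_norm_sub x y z
      rw [norm_sub_rev y z] at this; linarith
    rw [hgt_out y hy.le, hgt_in x hx.le, ← hS z hzn]
    calc ‖g x - g z‖ ≤ K * ‖x - z‖ := hlip x (by simpa using hx.le) z (by simp [hzn])
      _ ≤ K * (2 * ‖x - y‖) := by gcongr
      _ = _ := by ring
  have hLip : ∀ x y, ‖gt x - gt y‖ ≤ 2 * K * ‖x - y‖ := by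
    intro x y
    rcases le_or_gt ‖x‖ R with hx | hx <;> rcases le_or_gt ‖y‖ R with hy | hy
    · rw [hgt_in x hx, hgt_in y hy]
      refine (hlip x (by simpa using hx) y (by simpa using hy)).trans ?_
      have := norm_nonneg (x - y); nlinarith
    · rcases hx.lt_or_eq with hx | hx
      · exact hmix x y hx hy
      · rw [hgt_out x hx.ge, hgt_out y hy.le]; simp; positivity
    · rcases hy.lt_or_eq with hy | hy
      · rw [norm_sub_rev, norm_sub_rev x]; exact hmix y x hy hx
      · rw [hgt_out x hx.le, hgt_out y hy.ge]; simp; positivity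
    · rw [hgt_out x hx.le, hgt_out y hy.le]; simp; positivity
  -- positivity of the determinant near identity
  have hdc : Continuous fun A : E →L[ℝ] E => A.det := ContinuousLinearMap.continuous_det
  have hpos : ∀ᶠ A in 𝓝 (ContinuousLinearMap.id ℝ E), 0 < A.det := by
    apply hdc.continuousAt.eventually_const_lt
    simp [ContinuousLinearMap.det]
  obtain ⟨ε, hε, hball⟩ := Metric.eventually_nhds_iff.1 hpos
  refine ⟨min (1 / (2 * K + 1)) (ε / K), by positivity, ?_⟩
  intro t ht0 ht
  have ht1 : t * (2 * K) < 1 := by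
    have : t < 1 / (2 * K + 1) := ht.trans_le (min_le_left _ _)
    rw [lt_div_iff₀ (by positivity)] at this; linarith
  have ht2 : t * K < ε := by
    have : t < ε / K := ht.trans_le (min_le_right _ _)
    rwa [lt_div_iff₀ (by positivity)] at this
  let h : E → E := fun x => x + t • gt x
  have happ : ApproximatesLinearOn h ((ContinuousLinearEquiv.refl ℝ E : E ≃L[ℝ] E) : E →L[ℝ] E)
      univ (Real.toNNReal (t * (2 * K))) := by
    intro x _ y _
    have : h x - h y - ((ContinuousLinearEquiv.refl ℝ E : E ≃L[ℝ] E) : E →L[ℝ] E) (x - y)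
        = t • (gt x - gt y) := by
      simp [h, smul_sub]; abel
    rw [this, norm_smul, Real.norm_eq_abs, abs_of_pos ht0, Real.coe_toNNReal _ (by positivity),
      mul_assoc]
    gcongr
    exact hLip x y
  have hc : Subsingleton E ∨ Real.toNNReal (t * (2 * K)) <
      ‖((ContinuousLinearEquiv.refl ℝ E).symm : E →L[ℝ] E)‖₊⁻¹ := by
    rcases subsingleton_or_nontrivial E with hE | hE
    · exact Or.inl hE
    · right
      have : ‖((ContinuousLinearEquiv.refl ℝ E).symm : E →L[ℝ] E)‖₊ = 1 := by
        ext; simp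
      rw [this, inv_one, ← NNReal.coe_lt_coe, Real.coe_toNNReal _ (by positivity)]
      exact ht1
  have hinj : InjOn h univ := happ.injOn hc
  have hsurj : Function.Surjective h := happ.surjective hc
  have hout : ∀ x, R ≤ ‖x‖ → h x = x := fun x hx => by simp [h, hgt_out x hx]
  have himg : h '' ball 0 R = ball 0 R := by
    ext y
    constructor
    · rintro ⟨x, hx, rfl⟩
      by_contra hy
      have h1 : R ≤ ‖h x‖ := by simpa using hy
      have h2 := hout _ h1
      have h3 := hinj (mem_univ _) (mem_univ _) h2
      rw [h3] at h1
      have : ‖x‖ < R := by simpa using hx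
      linarith
    · intro hy
      obtain ⟨x, rfl⟩ := hsurj y
      refine ⟨x, ?_, rfl⟩
      by_contra hx
      have h1 : R ≤ ‖x‖ := by simpa using hx
      rw [hout x h1] at hy
      exact hx hy
  have hder : ∀ x ∈ ball (0:E) R, HasFDerivWithinAt h
      (ContinuousLinearMap.id ℝ E + t • fderiv ℝ g x) (ball 0 R) x := by
    intro x hx
    have h1 : HasFDerivAt (fun x => x + t • g x) (ContinuousLinearMap.id ℝ E + t • fderiv ℝ g x) x :=
      (hasFDerivAt_id x).add (((hg.differentiable one_ne_zero) x).hasFDerivAt.const_smul t)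
    refine h1.hasFDerivWithinAt.congr ?_ ?_
    · intro y hy
      have : ‖y‖ < R := by simpa using hy
      simp [h, hgt_in y this.le]
    · have : ‖x‖ < R := by simpa using hx
      simp [h, hgt_in x this.le]
  have hdet : ∀ x ∈ ball (0:E) R, 0 < (ContinuousLinearMap.id ℝ E + t • fderiv ℝ g x).det := by
    intro x hx
    apply hball
    rw [dist_eq_norm, add_sub_cancel_left, norm_smul, Real.norm_eq_abs, abs_of_pos ht0]
    refine lt_of_le_of_lt ?_ ht2
    gcongr
    exact hK x (ball_subset_closedBall hx)
  have key := integral_image_eq_integral_abs_det_fderiv_smul volume measurableSet_ball hder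
    (hinj.mono (subset_univ _)) (fun _ => (1:ℝ))
  rw [himg] at key
  simp only [smul_eq_mul, mul_one] at key
  rw [setIntegral_congr_fun (g := fun x => |(ContinuousLinearMap.id ℝ E + t • fderiv ℝ g x).det|)
    measurableSet_ball (fun x hx => (abs_of_pos (hdet x hx)).symm), ← key]
  simp [Measure.real]

theorem br_lag {E : Type*} [NormedAddCommGroup E] [InnerProductSpace ℝ E] [FiniteDimensional ℝ E]
    (t0 : ℝ) (ht0 : 0 < t0) : ∃ (s : Finset ℕ) (v w : ℕ → ℝ), (∀ i ∈ s, 0 < v i ∧ v i < t0) ∧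
      (∑ i ∈ s, w i = 1) ∧ ∀ A : E →L[ℝ] E, (ContinuousLinearMap.id ℝ E + A).det =
        ∑ i ∈ s, w i * (ContinuousLinearMap.id ℝ E + v i • A).det := by
  classical
  let d := Module.finrank ℝ E
  let b := Module.finBasis ℝ E
  let s := Finset.range (d + 1)
  let v : ℕ → ℝ := fun i => t0 / (i + 2)
  have hv : Set.InjOn v s := by
    intro i _ j _ hij
    have h1 : (0:ℝ) < i + 2 := by positivity
    have h2 : (0:ℝ) < j + 2 := by positivity
    simp only [v] at hij
    rw [div_eq_div_iff h1.ne' h2.ne'] at hij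
    have := mul_left_cancel₀ ht0.ne' hij
    have : (i:ℝ) = j := by linarith
    exact_mod_cast this
  refine ⟨s, v, fun i => (Lagrange.basis s v i).eval 1, ?_, ?_, ?_⟩
  · intro i _
    refine ⟨by positivity, ?_⟩
    rw [div_lt_iff₀ (by positivity)]
    have : (0:ℝ) ≤ i := by positivity
    nlinarith
  · rw [← Polynomial.eval_finsetSum, Lagrange.sum_basis hv (by simp [s])]
    simp
  · intro A
    let MA := LinearMap.toMatrix b b (A : E →ₗ[ℝ] E)
    let p : Polynomial ℝ := Matrix.det ((Polynomial.X : Polynomial ℝ) • MA.map Polynomial.C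
      + (1 : Matrix (Fin d) (Fin d) ℝ).map Polynomial.C)
    have hp : ∀ t, p.eval t = (ContinuousLinearMap.id ℝ E + t • A).det := by
      intro t
      have h1 : (ContinuousLinearMap.id ℝ E + t • A).det = (1 + t • MA).det := by
        rw [ContinuousLinearMap.det, ← LinearMap.det_toMatrix b]
        congr 1
        simp [MA, LinearMap.toMatrix_id]
      rw [h1]
      simp only [p]
      rw [← Polynomial.coe_evalRingHom, RingHom.map_det]
      congr 1
      ext i j
      by_cases hij : i = j <;> simp [Matrix.one_apply, hij] <;> ring
    have hdeg : p.degree < s.card := by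
      have := Polynomial.natDegree_det_X_add_C_le MA (1 : Matrix (Fin d) (Fin d) ℝ)
      refine lt_of_le_of_lt Polynomial.degree_le_natDegree ?_
      simp only [s, Finset.card_range]
      rw [Fintype.card_fin] at this
      exact_mod_cast Nat.lt_succ_of_le this
    have h := Lagrange.eq_interpolate hv hdeg
    have h2 := hp 1
    rw [one_smul] at h2
    rw [← h2, h, Lagrange.interpolate_apply, Polynomial.eval_finsetSum]
    refine Finset.sum_congr rfl fun i _ => ?_
    rw [Polynomial.eval_mul, Polynomial.eval_C, hp, mul_comm]

open Set Metric MeasureTheory Topology in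
theorem br_noretract {E : Type*} [NormedAddCommGroup E] [InnerProductSpace ℝ E]
    [FiniteDimensional ℝ E] (R : ℝ) (hR : 0 < R) (r : E → E) (hr : ContDiff ℝ 1 r)
    (hn : ∀ x, ‖r x‖ = R) (hS : ∀ x, ‖x‖ = R → r x = x) : False := by
  letI : MeasurableSpace E := borel E
  haveI : BorelSpace E := ⟨rfl⟩
  have hg : ContDiff ℝ 1 (fun x => r x - x) := hr.sub contDiff_id
  obtain ⟨t0, ht0, hvol⟩ := br_vol R (fun x => r x - x) hg (fun x hx => by simp [hS x hx])
  obtain ⟨s, v, w, hv, hw, hdet⟩ := br_lag (E := E) t0 ht0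
  set g := fun x => r x - x with hgdef
  have hcD : Continuous (fderiv ℝ g) := hg.continuous_fderiv one_ne_zero
  have hdc : Continuous fun A : E →L[ℝ] E => A.det := ContinuousLinearMap.continuous_det
  have hintg : ∀ t : ℝ, IntegrableOn
      (fun x => (ContinuousLinearMap.id ℝ E + t • fderiv ℝ g x).det) (ball 0 R) volume := by
    intro t
    have : Continuous (fun x => (ContinuousLinearMap.id ℝ E + t • fderiv ℝ g x).det) := by
      apply hdc.comp
      fun_prop
    exact (this.continuousOn.integrableOn_compact (isCompact_closedBall (0:E) R)).mono_set
      ball_subset_closedBall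
  have h0 : ∀ x, (ContinuousLinearMap.id ℝ E + fderiv ℝ g x).det = 0 := by
    intro x
    have h1 : ContinuousLinearMap.id ℝ E + fderiv ℝ g x = fderiv ℝ r x := by
      rw [hgdef, fderiv_fun_sub ((hr.differentiable one_ne_zero) x) differentiableAt_fun_id]
      simp
    rw [h1]
    by_contra hne
    have hr' := ((hr.differentiable one_ne_zero) x).hasFDerivAt
    have h2 := hr'.norm_sq
    have h3 : (fun x => ‖r x‖ ^ 2) = fun _ => R ^ 2 := by ext y; rw [hn]
    rw [h3] at h2
    have h4 := h2.unique (hasFDerivAt_const _ _)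
    have hsurj : Function.Surjective (fderiv ℝ r x) := by
      have := LinearMap.equivOfDetNeZero (fderiv ℝ r x : E →ₗ[ℝ] E) hne
      intro y
      have hu : IsUnit (fderiv ℝ r x : E →ₗ[ℝ] E) :=
        (LinearMap.isUnit_iff_isUnit_det _).2 (isUnit_iff_ne_zero.2 hne)
      exact ((Module.End.isUnit_iff _).1 hu).2 y
    obtain ⟨u, hu⟩ := hsurj (r x)
    have h5 := congrArg (fun T : E →L[ℝ] ℝ => T u) h4
    simp [hu] at h5
    have := hn x
    rw [h5] at this
    simp at this; linarith
  have : ∫ x in ball (0:E) R, (ContinuousLinearMap.id ℝ E + fderiv ℝ g x).det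
      = (volume (ball (0:E) R)).toReal := by
    have e : (fun x => (ContinuousLinearMap.id ℝ E + fderiv ℝ g x).det) = fun x =>
        ∑ i ∈ s, w i * (ContinuousLinearMap.id ℝ E + v i • fderiv ℝ g x).det :=
      funext fun x => hdet _
    rw [e, integral_finsetSum _ (fun i _ => (hintg (v i)).const_mul _)]
    simp_rw [integral_const_mul]
    rw [Finset.sum_congr rfl (fun i hi => by rw [hvol (v i) (hv i hi).1 (hv i hi).2]),
      ← Finset.sum_mul, hw, one_mul]
  simp_rw [h0, integral_zero] at this
  have h6 : 0 < (volume (ball (0:E) R)).toReal :=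
    ENNReal.toReal_pos (measure_ball_pos _ _ hR).ne' measure_ball_lt_top.ne
  rw [← this] at h6
  exact lt_irrefl _ h6

open Set Metric Topology in
/-- Brouwer fixed point theorem. -/
theorem br_fixed {E : Type*} [NormedAddCommGroup E] [InnerProductSpace ℝ E]
    [FiniteDimensional ℝ E] (f : E → E) (hf : Continuous f)
    (hb : ∀ x, ‖f x‖ ≤ 1) : ∃ x, ‖x‖ ≤ 1 ∧ f x = x := by
  by_contra hno
  push Not at hno
  have hno : ∀ x, f x ≠ x := fun x hx => hno x (by rw [← hx]; exact hb x) hx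
  let G : E → E := fun x => x - (max 0 (min 1 (2 - ‖x‖))) • f x
  have hG : Continuous G := by fun_prop
  have hG0 : ∀ x, G x ≠ 0 := by
    intro x hx
    have hx' : x = (max 0 (min 1 (2 - ‖x‖))) • f x := sub_eq_zero.1 hx
    have h1 : max 0 (min 1 (2 - ‖x‖)) ≤ 1 := by simp
    have h2 : ‖x‖ ≤ 1 := by
      conv_lhs => rw [hx']
      rw [norm_smul, Real.norm_eq_abs, abs_of_nonneg (le_max_left _ _)]
      have := hb x
      have := norm_nonneg (f x)
      have : (0:ℝ) ≤ max 0 (min 1 (2 - ‖x‖)) := le_max_left _ _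
      nlinarith
    rw [min_eq_left (by linarith), max_eq_right zero_le_one, one_smul] at hx'
    exact hno x hx'.symm
  have hGid : ∀ x, 2 ≤ ‖x‖ → G x = x := by
    intro x hx
    simp only [G]
    rw [max_eq_left ((min_le_right _ _).trans (by linarith))]; simp
  obtain ⟨g, hgC, hgd, hgeq, -⟩ := hG.exists_contDiff_approx_and_eqOn 1 (ε := fun x => ‖G x‖)
    hG.norm (fun x => norm_pos_iff.2 (hG0 x)) (S := {x | 3 ≤ ‖x‖}) (U := {x | 2 < ‖x‖})
    (isClosed_le continuous_const continuous_norm)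
    ((isOpen_lt continuous_const continuous_norm).mem_nhdsSet.2 (fun x hx => by
      simp only [mem_ofPred_eq] at *; linarith))
    (contDiffOn_id.congr (fun x hx => hGid x (le_of_lt hx)))
  have hg0 : ∀ x, g x ≠ 0 := by
    intro x hx
    have := hgd x
    rw [hx, dist_zero_left] at this
    exact lt_irrefl _ this
  refine br_noretract 3 (by norm_num) (fun x => (3 / ‖g x‖) • g x) ?_ ?_ ?_
  · exact (contDiff_const.div (ContDiff.norm ℝ hgC hg0) (fun x => norm_ne_zero_iff.2 (hg0 x))).smul hgC
  · intro x
    have : 0 < ‖g x‖ := norm_pos_iff.2 (hg0 x)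
    rw [norm_smul, Real.norm_eq_abs, abs_of_pos (by positivity)]
    field_simp
  · intro x hx
    have : g x = x := by rw [hgeq (show 3 ≤ ‖x‖ from hx.ge), hGid x (by rw [hx]; norm_num)]
    simp [this, hx]

open Set Metric Topology in
theorem br_fixedOn {E : Type*} [NormedAddCommGroup E] [InnerProductSpace ℝ E]
    [FiniteDimensional ℝ E] (f : E → E) (hf : ContinuousOn f (closedBall 0 1))
    (hb : ∀ x, ‖x‖ ≤ 1 → ‖f x‖ ≤ 1) : ∃ x, ‖x‖ ≤ 1 ∧ f x = x := by
  let p : E → E := fun x => (1 / max 1 ‖x‖) • x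
  have hpos : ∀ x : E, 0 < max 1 ‖x‖ := fun x => lt_max_of_lt_left one_pos
  have hp : Continuous p :=
    (continuous_const.div (by fun_prop) (fun x => (hpos x).ne')).smul continuous_id
  have hpn : ∀ x, ‖p x‖ ≤ 1 := by
    intro x
    have := hpos x
    simp only [p]
    rw [norm_smul, Real.norm_eq_abs, abs_of_pos (by positivity), one_div, ← div_eq_inv_mul,
      div_le_one (hpos x)]
    exact le_max_right _ _
  obtain ⟨x, hx, hfx⟩ := br_fixed (fun x => f (p x))
    (hf.comp_continuous hp (fun x => by simpa using hpn x)) (fun x => hb _ (hpn x))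
  have : p x = x := by simp [p, max_eq_left hx]
  rw [this] at hfx
  exact ⟨x, hx, hfx⟩

open Set Metric MeasureTheory Topology in
/-- Local invariance of domain. -/
theorem inv_dom0 {E : Type*} [NormedAddCommGroup E] [InnerProductSpace ℝ E]
    [FiniteDimensional ℝ E] (f : E → E) (hf : ContinuousOn f (closedBall 0 1))
    (hi : InjOn f (closedBall 0 1)) : f '' closedBall 0 1 ∈ 𝓝 (f 0) := by
  let _ : MeasurableSpace E := borel E
  have _ : BorelSpace E := ⟨rfl⟩
  by_contra hnot
  let K := closedBall (0:E) 1
  have hKc : IsCompact K := isCompact_closedBall _ _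
  have : CompactSpace K := isCompact_iff_compactSpace.1 hKc
  have he : IsClosedEmbedding (fun x : K => f x) :=
    Continuous.isClosedEmbedding (continuousOn_iff_continuous_domRestrict.1 hf)
      (injOn_iff_injective.1 hi)
  obtain ⟨g, hg⟩ := ContinuousMap.exists_extension' he
    (⟨Subtype.val, continuous_subtype_val⟩ : C(K, E))
  have hgf : ∀ x, ‖x‖ ≤ 1 → g (f x) = x := fun x hx =>
    congrFun hg ⟨x, by simpa [K] using hx⟩
  have hg0 : g (f 0) = 0 := hgf 0 (by simp)
  have hev : ∀ᶠ y in 𝓝 (f 0), ‖g y‖ < 1 / 10 := by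
    apply (g.continuous.norm.continuousAt).eventually_lt_const
    simp [hg0]
  obtain ⟨ε', hε', hsm⟩ := Metric.eventually_nhds_iff.1 hev
  obtain ⟨ε, hε, hεε⟩ : ∃ ε > 0, 2 * ε = ε' := ⟨ε' / 2, by positivity, by ring⟩
  subst hεε
  obtain ⟨c, hc, hcS⟩ : ∃ c, ‖c - f 0‖ < ε ∧ c ∉ f '' K := by
    by_contra hcon
    push Not at hcon
    exact hnot (Filter.mem_of_superset (ball_mem_nhds _ hε) fun c hc =>
      hcon c (by simpa [dist_eq_norm] using hc))
  have hScomp : IsCompact (f '' K) := hKc.image_of_continuousOn hf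
  have hS1 : IsCompact (f '' K ∩ {y | ε ≤ ‖y - c‖}) :=
    hScomp.inter_right (isClosed_le continuous_const (by fun_prop))
  obtain ⟨η, hη, hη1, hηS⟩ : ∃ η > 0, η ≤ (1:ℝ) / 10 ∧
      ∀ y ∈ f '' K, ε ≤ ‖y - c‖ → η ≤ ‖g y‖ := by
    rcases (f '' K ∩ {y | ε ≤ ‖y - c‖}).eq_empty_or_nonempty with h | h
    · refine ⟨1 / 10, by norm_num, le_rfl, fun y hy hyc => ?_⟩
      have : y ∈ f '' K ∩ {y | ε ≤ ‖y - c‖} := ⟨hy, hyc⟩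
      rw [h] at this; exact this.elim
    · obtain ⟨y0, ⟨hy0, hy0c⟩, hmin⟩ := hS1.exists_isMinOn h g.continuous.norm.continuousOn
      refine ⟨min (‖g y0‖) (1 / 10), lt_min ?_ (by norm_num), min_le_right _ _, ?_⟩
      · rw [norm_pos_iff]
        intro h0
        obtain ⟨x, hx, rfl⟩ := hy0
        rw [hgf x (by simpa [K] using hx)] at h0
        subst h0
        have : ε ≤ ‖f 0 - c‖ := hy0c
        rw [norm_sub_rev] at this
        linarith
      · intro y hy hyc
        exact (min_le_left _ _).trans (hmin ⟨hy, hyc⟩)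
  obtain ⟨P, hPC, hPd, -⟩ := g.continuous.exists_contDiff_approx 1 (ε := fun _ => η / 2)
    continuous_const (fun _ => by positivity)
  have hnull : volume (P '' sphere c ε) = 0 :=
    addHaar_image_eq_zero_of_differentiableOn_of_addHaar_eq_zero volume
      (hPC.differentiable (by simp)).differentiableOn
      (Measure.addHaar_sphere_of_ne_zero _ _ hε.ne')
  obtain ⟨a, ha, haP⟩ : ∃ a : E, ‖a‖ < η / 2 ∧ a ∉ P '' sphere c ε := by
    by_contra hcon
    push Not at hcon
    have h1 : volume (ball (0:E) (η / 2)) ≤ volume (P '' sphere c ε) :=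
      measure_mono fun y hy => hcon y (by simpa using hy)
    rw [hnull] at h1
    exact (measure_ball_pos volume (0:E) (by positivity : 0 < η / 2)).not_ge h1
  let Q : E → E := fun y => P y - a
  have hQc : Continuous Q := hPC.continuous.sub continuous_const
  have hQg : ∀ y, ‖Q y - g y‖ < η := by
    intro y
    have h1 := hPd y
    rw [dist_eq_norm] at h1
    have : Q y - g y = (P y - g y) - a := by simp only [Q]; abel
    rw [this]
    have := norm_sub_le (P y - g y) a
    linarith
  let Φ : E → E := fun y => c + (max (ε / ‖y - c‖) 1) • (y - c)
  have hne : ∀ x ∈ K, f x - c ≠ 0 := by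
    intro x hx h
    exact hcS ⟨x, hx, sub_eq_zero.1 h⟩
  have hΦfar : ∀ x ∈ K, ε ≤ ‖f x - c‖ → Φ (f x) = f x := by
    intro x hx h
    have h0 : 0 < ‖f x - c‖ := norm_pos_iff.2 (hne x hx)
    simp only [Φ]
    rw [max_eq_right ((div_le_one h0).2 h)]; simp
  have hΦnear : ∀ x ∈ K, ‖f x - c‖ < ε → ‖Φ (f x) - c‖ = ε := by
    intro x hx h
    have h0 : 0 < ‖f x - c‖ := norm_pos_iff.2 (hne x hx)
    simp only [Φ]
    rw [max_eq_left ((one_le_div h0).2 h.le), add_sub_cancel_left, norm_smul, Real.norm_eq_abs,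
      abs_of_pos (by positivity)]
    field_simp
  have hΦc : ContinuousOn (fun x => Φ (f x)) K := by
    refine continuousOn_const.add (ContinuousOn.smul ?_ (hf.sub continuousOn_const))
    refine ContinuousOn.sup ?_ continuousOn_const
    exact continuousOn_const.div (hf.sub continuousOn_const).norm
      (fun x hx => norm_ne_zero_iff.2 (hne x hx))
  obtain ⟨x, hx, hfx⟩ := br_fixedOn (fun x => x - Q (Φ (f x)))
    (continuousOn_id.sub (hQc.comp_continuousOn hΦc)) (by
      intro x hx
      have hxK : x ∈ K := by simpa [K] using hx
      rcases le_or_gt ε ‖f x - c‖ with h | h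
      · rw [hΦfar x hxK h]
        have := hQg (f x)
        rw [hgf x hx, norm_sub_rev] at this
        linarith
      · have h1 := hΦnear x hxK h
        have h2 : ‖g (f x)‖ < 1 / 10 := hsm (by
          rw [dist_eq_norm]
          have := norm_sub_le_norm_sub_add_norm_sub (f x) c (f 0)
          linarith)
        have h3 : ‖g (Φ (f x))‖ < 1 / 10 := hsm (by
          rw [dist_eq_norm]
          have := norm_sub_le_norm_sub_add_norm_sub (Φ (f x)) c (f 0)
          linarith)
        rw [hgf x hx] at h2
        have h4 := hQg (Φ (f x))
        have h5 : x - Q (Φ (f x)) = x - g (Φ (f x)) - (Q (Φ (f x)) - g (Φ (f x))) := by abel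
        rw [h5]
        have h6 := norm_sub_le (x - g (Φ (f x))) (Q (Φ (f x)) - g (Φ (f x)))
        have h7 := norm_sub_le x (g (Φ (f x)))
        linarith)
  have hxK : x ∈ K := by simpa [K] using hx
  have hQ0 : Q (Φ (f x)) = 0 := by simpa using hfx
  rcases le_or_gt ε ‖f x - c‖ with h | h
  · rw [hΦfar x hxK h] at hQ0
    have h1 := hQg (f x)
    rw [hQ0, zero_sub, norm_neg] at h1
    have := hηS (f x) ⟨x, hxK, rfl⟩ h
    linarith
  · have h1 := hΦnear x hxK h
    exact haP ⟨Φ (f x), by simpa [dist_eq_norm] using h1, sub_eq_zero.1 hQ0⟩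

open Set Metric Topology in
/-- Invariance of domain. -/
theorem inv_dom {E : Type*} [NormedAddCommGroup E] [InnerProductSpace ℝ E]
    [FiniteDimensional ℝ E] (U : Set E) (hU : IsOpen U) (f : E → E) (hf : ContinuousOn f U)
    (hi : InjOn f U) : IsOpen (f '' U) := by
  rw [isOpen_iff_mem_nhds]
  rintro _ ⟨x, hx, rfl⟩
  obtain ⟨ρ, hρ, hb⟩ := Metric.nhds_basis_closedBall.mem_iff.1 (hU.mem_nhds hx)
  have hmem : ∀ y ∈ closedBall (0:E) 1, x + ρ • y ∈ U := by
    intro y hy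
    apply hb
    have : ‖y‖ ≤ 1 := by simpa using hy
    rw [mem_closedBall, dist_eq_norm, add_sub_cancel_left, norm_smul, Real.norm_eq_abs,
      abs_of_pos hρ]
    nlinarith
  have h := inv_dom0 (fun y => f (x + ρ • y))
    (hf.comp (by fun_prop) hmem) (by
      intro y hy z hz h
      have := hi (hmem y hy) (hmem z hz) h
      exact smul_right_injective E hρ.ne' (add_left_cancel this))
  simp only [smul_zero, add_zero] at h
  refine Filter.mem_of_superset h ?_
  rintro _ ⟨y, hy, rfl⟩
  exact ⟨_, hmem y hy, rfl⟩

open Set Metric Topology in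
/-- Invariance of domain, for maps into spaces that locally inject into `E`. -/
theorem inv_dom_mfd {E X : Type*} [NormedAddCommGroup E] [InnerProductSpace ℝ E]
    [FiniteDimensional ℝ E] [TopologicalSpace X]
    (hX : ∀ x : X, ∃ U : Set X, x ∈ U ∧ IsOpen U ∧ ∃ ψ : U → E, Continuous ψ ∧ Function.Injective ψ)
    (e : E → X) (he : Continuous e) (hi : Function.Injective e) : IsOpen (range e) := by
  classical
  rw [isOpen_iff_mem_nhds]
  rintro _ ⟨y, rfl⟩
  obtain ⟨U, hxU, hU, ψ, hψ, hψi⟩ := hX (e y)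
  let O := e ⁻¹' U
  have hO : IsOpen O := hU.preimage he
  let k : E → E := fun z => if h : e z ∈ U then ψ ⟨e z, h⟩ else 0
  have hk : ∀ z : O, k z = ψ ⟨e z, z.2⟩ := fun z => dif_pos z.2
  have hkc : ContinuousOn k O := by
    rw [continuousOn_iff_continuous_domRestrict]
    have : O.domRestrict k = fun z : O => ψ ⟨e z, z.2⟩ := funext hk
    rw [this]
    exact hψ.comp (Continuous.subtype_mk (he.comp continuous_subtype_val) _)
  have hki : InjOn k O := by
    intro a ha b hb hab
    rw [hk ⟨a, ha⟩, hk ⟨b, hb⟩] at hab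
    exact hi (congrArg Subtype.val (hψi hab))
  have hopen := inv_dom O hO k hkc hki
  have h2 : IsOpen (Subtype.val '' (ψ ⁻¹' (k '' O))) :=
    hU.isOpenMap_subtype_val _ (hopen.preimage hψ)
  refine Filter.mem_of_superset (h2.mem_nhds ⟨⟨e y, hxU⟩, ⟨y, hxU, hk ⟨y, hxU⟩⟩, rfl⟩) ?_
  rintro _ ⟨u, ⟨z, hz, hzu⟩, rfl⟩
  rw [hk ⟨z, hz⟩] at hzu
  exact ⟨z, congrArg Subtype.val (hψi hzu)⟩

/-- Absolute extensor property (for metric domains) of a subset of a space. -/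
def AExt {M : Type} [TopologicalSpace M] (S : Set M) : Prop :=
  ∀ (X : Type) [MetricSpace X] (K : Set X), IsClosed K → ∀ f : X → M, ContinuousOn f K →
    Set.MapsTo f K S → ∃ F : X → M, Continuous F ∧ (∀ x, F x ∈ S) ∧ Set.EqOn F f K

open Set Metric Topology in
theorem AExt_union {M : Type} [TopologicalSpace M] {A B T : Set M} (hA : IsClosed A)
    (hB : IsClosed B) (hcov : A ∪ B = univ)
    (eA : AExt (A ∩ T)) (eB : AExt (B ∩ T)) (eC : AExt (A ∩ B ∩ T)) : AExt T := by
  intro X _ K hK f hf hfT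
  classical
  let KA := K ∩ f ⁻¹' A
  let KB := K ∩ f ⁻¹' B
  have hKA : IsClosed KA := hf.preimage_isClosed_of_isClosed hK hA
  have hKB : IsClosed KB := hf.preimage_isClosed_of_isClosed hK hB
  have hKK : ∀ x ∈ K, x ∈ KA ∨ x ∈ KB := by
    intro x hx
    have : f x ∈ A ∪ B := by rw [hcov]; trivial
    exact this.imp (fun h => ⟨hx, h⟩) (fun h => ⟨hx, h⟩)
  let XA := {x | infEDist x KA ≤ infEDist x KB}
  let XB := {x | infEDist x KB ≤ infEDist x KA}
  have hXA : IsClosed XA := isClosed_le continuous_infEDist continuous_infEDist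
  have hXB : IsClosed XB := isClosed_le continuous_infEDist continuous_infEDist
  have hX : ∀ x, x ∈ XA ∨ x ∈ XB := fun x => le_total (infEDist x KA) (infEDist x KB)
  have hKAX : KA ⊆ XA := by
    intro x hx
    show infEDist x KA ≤ infEDist x KB
    rw [infEDist_zero_of_mem hx]; exact zero_le
  have hKBX : KB ⊆ XB := by
    intro x hx
    show infEDist x KB ≤ infEDist x KA
    rw [infEDist_zero_of_mem hx]; exact zero_le
  have hXAK : ∀ x ∈ XA, x ∈ K → x ∈ KA := by
    intro x hx hxK
    rcases hKK x hxK with h | h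
    · exact h
    · have h1 : infEDist x KA ≤ infEDist x KB := hx
      rw [infEDist_zero_of_mem h] at h1
      exact (Metric.mem_iff_infEDist_zero_of_closed hKA).2 (le_antisymm h1 zero_le)
  have hXBK : ∀ x ∈ XB, x ∈ K → x ∈ KB := by
    intro x hx hxK
    rcases hKK x hxK with h | h
    · have h1 : infEDist x KB ≤ infEDist x KA := hx
      rw [infEDist_zero_of_mem h] at h1
      exact (Metric.mem_iff_infEDist_zero_of_closed hKB).2 (le_antisymm h1 zero_le)
    · exact h
  obtain ⟨FC, hFCc, hFCm, hFCe⟩ := eC X (KA ∩ KB) (hKA.inter hKB) f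
    (hf.mono fun x hx => hx.1.1) (fun x hx => ⟨⟨hx.1.2, hx.2.2⟩, hfT hx.1.1⟩)
  let f' : X → M := fun x => if x ∈ XA ∩ XB then FC x else f x
  have hf'1 : EqOn f' FC (XA ∩ XB) := fun x hx => if_pos hx
  have hf'2 : EqOn f' f K := by
    intro x hx
    by_cases h : x ∈ XA ∩ XB
    · rw [hf'1 h]; exact hFCe ⟨hXAK x h.1 hx, hXBK x h.2 hx⟩
    · exact if_neg h
  have hXAB : IsClosed (XA ∩ XB) := hXA.inter hXB
  have hcAB : ContinuousOn f' (XA ∩ XB) := hFCc.continuousOn.congr hf'1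
  have hcK : ContinuousOn f' K := hf.congr hf'2
  obtain ⟨FA, hFAc, hFAm, hFAe⟩ := eA X (KA ∪ (XA ∩ XB)) (hKA.union hXAB) f'
    ((hcK.mono fun x hx => hx.1).union_of_isClosed hcAB hKA hXAB) (by
      rintro x (hx | hx)
      · rw [hf'2 hx.1]; exact ⟨hx.2, hfT hx.1⟩
      · rw [hf'1 hx]; exact ⟨(hFCm x).1.1, (hFCm x).2⟩)
  obtain ⟨FB, hFBc, hFBm, hFBe⟩ := eB X (KB ∪ (XA ∩ XB)) (hKB.union hXAB) f'
    ((hcK.mono fun x hx => hx.1).union_of_isClosed hcAB hKB hXAB) (by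
      rintro x (hx | hx)
      · rw [hf'2 hx.1]; exact ⟨hx.2, hfT hx.1⟩
      · rw [hf'1 hx]; exact ⟨(hFCm x).1.2, (hFCm x).2⟩)
  let F : X → M := fun x => if x ∈ XA then FA x else FB x
  have hF1 : EqOn F FA XA := fun x hx => if_pos hx
  have hF2 : EqOn F FB XB := by
    intro x hx
    by_cases h : x ∈ XA
    · rw [hF1 h, hFAe (Or.inr ⟨h, hx⟩), hFBe (Or.inr ⟨h, hx⟩)]
    · exact if_neg h
  refine ⟨F, ?_, ?_, ?_⟩
  · rw [← continuousOn_univ]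
    have : univ = XA ∪ XB := by ext x; simpa using hX x
    rw [this]
    exact (hFAc.continuousOn.congr hF1).union_of_isClosed (hFBc.continuousOn.congr hF2) hXA hXB
  · intro x
    rcases hX x with h | h
    · rw [hF1 h]; exact (hFAm x).2
    · rw [hF2 h]; exact (hFBm x).2
  · intro x hx
    rcases hKK x hx with h | h
    · rw [hF1 (hKAX h), hFAe (Or.inl h), hf'2 hx]
    · rw [hF2 (hKBX h), hFBe (Or.inl h), hf'2 hx]

open Set Metric Topology in
theorem AExt_ball {E M : Type} [NormedAddCommGroup E] [InnerProductSpace ℝ E]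
    [FiniteDimensional ℝ E] [TopologicalSpace M] {S T : Set M}
    (h : S ≃ₜ closedBall (0:E) 1) (hT : ∀ y : S, ‖(h y : E)‖ < 1 → (y : M) ∈ T) :
    AExt (S ∩ T) := by
  intro X _ K hK f hf hfS
  have hz : (0:E) ∈ closedBall (0:E) 1 := by simp
  rcases K.eq_empty_or_nonempty with rfl | hne
  · refine ⟨fun _ => h.symm ⟨0, hz⟩, continuous_const, fun _ => ⟨(h.symm _).2, hT _ ?_⟩, ?_⟩
    · simp
    · intro x hx; exact hx.elim
  · have := Metric.instTietzeExtensionClosedBall.{0} ℝ (0:E) one_pos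
    let f1 : C(K, closedBall (0:E) 1) := ⟨fun k => h ⟨f k, (hfS k.2).1⟩,
      h.continuous.comp (Continuous.subtype_mk (continuousOn_iff_continuous_domRestrict.1 hf) _)⟩
    obtain ⟨g, hg⟩ := f1.exists_restrict_eq hK
    have hg' : ∀ (x : X) (hx : x ∈ K), g x = h ⟨f x, (hfS hx).1⟩ := fun x hx =>
      congrArg (fun φ : C(K, closedBall (0:E) 1) => φ ⟨x, hx⟩) hg
    let d : X → ℝ := fun x => 1 - min 1 (infDist x K)
    have hd : Continuous d := by
      have := continuous_infDist_pt K
      fun_prop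
    have hd0 : ∀ x, 0 ≤ d x := fun x => by simp [d]
    have hd1 : ∀ x, d x ≤ 1 := fun x => by
      have : 0 ≤ infDist x K := infDist_nonneg
      simp [d, this]
    have hgn : ∀ x, ‖(g x : E)‖ ≤ 1 := fun x => mem_closedBall_zero_iff.1 (g x).2
    let G : X → closedBall (0:E) 1 := fun x => ⟨d x • (g x : E), by
      rw [mem_closedBall_zero_iff, norm_smul, Real.norm_eq_abs, abs_of_nonneg (hd0 x)]
      have := hd0 x; have := hd1 x; have := hgn x; have := norm_nonneg (g x : E)
      nlinarith⟩
    have hG : Continuous G := by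
      refine Continuous.subtype_mk ?_ _
      exact hd.smul (continuous_subtype_val.comp g.continuous)
    have hGK : ∀ (x : X) (hx : x ∈ K), G x = h ⟨f x, (hfS hx).1⟩ := by
      intro x hx
      apply Subtype.ext
      simp [G, d, infDist_zero_of_mem hx, hg' x hx]
    refine ⟨fun x => h.symm (G x), continuous_subtype_val.comp (h.symm.continuous.comp hG), ?_, ?_⟩
    · intro x
      refine ⟨(h.symm _).2, ?_⟩
      by_cases hx : x ∈ K
      · show (h.symm (G x) : M) ∈ T
        rw [hGK x hx]; simpa using (hfS hx).2
      · apply hT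
        have hp : 0 < infDist x K := (hK.notMem_iff_infDist_pos hne).1 hx
        have hd2 : d x < 1 := by simp [d, hp]
        simp only [Homeomorph.apply_symm_apply, G]
        rw [norm_smul, Real.norm_eq_abs, abs_of_nonneg (hd0 x)]
        have := hd0 x; have := hgn x; have := norm_nonneg (g x : E)
        nlinarith
    · intro x hx
      simp only
      rw [hGK x hx]; simp

open Set Metric Topology in
theorem degree_contra {E M : Type} [NormedAddCommGroup E] [InnerProductSpace ℝ E]
    [FiniteDimensional ℝ E] [TopologicalSpace M] [T2Space M]
    (φ : E → M) (hφ : IsOpenEmbedding φ) (h1 : AExt (univ : Set M)) (h2 : AExt ({φ 0}ᶜ : Set M)) :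
    False := by
  classical
  obtain ⟨f, hfc, hfm, hfe⟩ := h2 E (sphere (0:E) 1) isClosed_sphere φ hφ.continuous.continuousOn (by
    intro y hy h
    have : y = 0 := hφ.injective h
    subst this
    simp at hy)
  have hcl : IsClosed (f '' closedBall (0:E) 1) :=
    ((isCompact_closedBall (0:E) 1).image hfc).isClosed
  have hnb : φ ⁻¹' (f '' closedBall (0:E) 1)ᶜ ∈ 𝓝 (0:E) :=
    (hcl.isOpen_compl.preimage hφ.continuous).mem_nhds (by
      rintro ⟨y, -, hy⟩
      exact hfm y hy)
  obtain ⟨ε, hε, hεb⟩ := Metric.mem_nhds_iff.1 hnb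
  let F0 : WithLp 2 (E × ℝ) → M := fun z => if 0 ≤ z.snd then φ z.fst else f z.fst
  have hfst : Continuous (fun z : WithLp 2 (E × ℝ) => z.fst) := WithLp.continuous_fst ..
  have hsnd : Continuous (fun z : WithLp 2 (E × ℝ) => z.snd) := WithLp.continuous_snd ..
  have hF0 : ContinuousOn F0 (sphere 0 1) := by
    have hs : sphere (0 : WithLp 2 (E × ℝ)) 1 =
        (sphere 0 1 ∩ {z | 0 ≤ z.snd}) ∪ (sphere 0 1 ∩ {z | z.snd ≤ 0}) := by
      ext z
      constructor
      · intro hz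
        exact (le_total 0 z.snd).imp (fun h => ⟨hz, h⟩) (fun h => ⟨hz, h⟩)
      · rintro (h | h) <;> exact h.1
    rw [hs]
    refine ContinuousOn.union_of_isClosed ?_ ?_
      (isClosed_sphere.inter (isClosed_le continuous_const hsnd))
      (isClosed_sphere.inter (isClosed_le hsnd continuous_const))
    · exact (hφ.continuous.comp hfst).continuousOn.congr fun z hz => if_pos hz.2
    · refine (hfc.comp hfst).continuousOn.congr fun z hz => ?_
      by_cases h : 0 ≤ z.snd
      · have h0 : z.snd = 0 := le_antisymm hz.2 h
        have hn : ‖z‖ = 1 := by simpa using hz.1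
        have h3 := WithLp.prod_norm_sq_eq_of_L2 z
        rw [hn, h0] at h3
        have h4 : ‖z.fst‖ = 1 := by
          have := norm_nonneg z.fst
          norm_num at h3
          nlinarith
        simp only [F0, if_pos h, Function.comp]
        exact (hfe (by simpa using h4)).symm
      · exact if_neg h
  obtain ⟨F, hFc, -, hFe⟩ := h1 _ (sphere (0 : WithLp 2 (E × ℝ)) 1) isClosed_sphere F0 hF0
    (mapsTo_univ _ _)
  let Q : E → WithLp 2 (E × ℝ) := fun y =>
    WithLp.toLp 2 ((max 0 (ε - ‖y‖)) • y, max (ε / 2 - ‖y‖) (-(ε / 2)))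
  have hQ : Continuous Q := (WithLp.prod_continuous_toLp 2 E ℝ).comp (by fun_prop)
  let w : WithLp 2 (E × ℝ) := WithLp.toLp 2 ((0:E), -(ε / 2))
  have hQfar : ∀ y, ε ≤ ‖y‖ → Q y = w := by
    intro y hy
    simp only [Q, w]
    rw [max_eq_left (by linarith), max_eq_right (by linarith), zero_smul]
  let q : M → WithLp 2 (E × ℝ) := Function.extend φ Q (fun _ => w)
  have hqφ : ∀ y, q (φ y) = Q y := fun y => hφ.injective.extend_apply _ _ _
  have hqo : ∀ m, m ∉ range φ → q m = w := fun m hm =>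
    Function.extend_apply' _ _ _ (fun ⟨a, ha⟩ => hm ⟨a, ha⟩)
  have hqc : Continuous q := by
    rw [continuous_iff_continuousAt]
    intro m
    by_cases hm : m ∈ range φ
    · obtain ⟨y, rfl⟩ := hm
      rw [← hφ.continuousAt_iff]
      have : q ∘ φ = Q := funext hqφ
      rw [this]
      exact hQ.continuousAt
    · have hc : IsClosed (φ '' closedBall (0:E) ε) :=
        ((isCompact_closedBall (0:E) ε).image hφ.continuous).isClosed
      have hev : q =ᶠ[𝓝 m] fun _ => w := by
        filter_upwards [hc.isOpen_compl.mem_nhds (fun ⟨y, _, hy⟩ => hm ⟨y, hy⟩)] with m' hm'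
        by_cases h : m' ∈ range φ
        · obtain ⟨y, rfl⟩ := h
          rw [hqφ]
          apply hQfar
          by_contra hlt
          exact hm' ⟨y, by simpa using (not_le.1 hlt).le, rfl⟩
        · exact hqo m' h
      exact continuousAt_const.congr hev.symm
  have hw0 : w ≠ 0 := by
    intro h
    have := congrArg WithLp.snd h
    simp [w] at this
    linarith
  have hQ0 : ∀ y, Q y ≠ 0 := by
    intro y h
    have ha : max (ε / 2 - ‖y‖) (-(ε / 2)) = 0 := congrArg WithLp.snd h
    have hb : (max 0 (ε - ‖y‖)) • y = 0 := congrArg WithLp.fst h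
    have hy : ‖y‖ = ε / 2 := by
      rcases max_choice (ε / 2 - ‖y‖) (-(ε / 2)) with h' | h' <;> rw [h'] at ha <;> linarith
    rcases smul_eq_zero.1 hb with h' | h'
    · rw [hy, max_eq_right (by linarith)] at h'; linarith
    · rw [h', norm_zero] at hy; linarith
  have hq0 : ∀ m, q m ≠ 0 := by
    intro m
    by_cases h : m ∈ range φ
    · obtain ⟨y, rfl⟩ := h
      rw [hqφ]; exact hQ0 y
    · rw [hqo m h]; exact hw0
  have hqp : ∀ m, 0 < ‖q m‖ := fun m => norm_pos_iff.2 (hq0 m)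
  have hqF : Continuous fun z => q (F z) := hqc.comp hFc
  have hnorm : ∀ z, ‖-((1 / ‖q (F z)‖) • q (F z))‖ = 1 := by
    intro z
    have := hqp (F z)
    rw [norm_neg, norm_smul, Real.norm_eq_abs, abs_of_pos (by positivity)]
    field_simp
  obtain ⟨z, hz, hfix⟩ := br_fixedOn (fun z => -((1 / ‖q (F z)‖) • q (F z)))
    ((continuous_const.div hqF.norm (fun z => (hqp _).ne')).smul hqF).neg.continuousOn
    (fun z _ => (hnorm z).le)
  have hz1 : ‖z‖ = 1 := by rw [← hfix]; exact hnorm z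
  obtain ⟨k, hk, hkq⟩ : ∃ k > (0:ℝ), q (F z) = -(k • z) := by
    refine ⟨‖q (F z)‖, hqp _, ?_⟩
    have := hqp (F z)
    have h5 : ‖q (F z)‖ • -((1 / ‖q (F z)‖) • q (F z)) = ‖q (F z)‖ • z :=
      congrArg (fun v => ‖q (F z)‖ • v) hfix
    rw [← h5, smul_neg, neg_neg, smul_smul, mul_one_div_cancel this.ne', one_smul]
  rw [hFe (by simpa using hz1)] at hkq
  by_cases ht : 0 ≤ z.snd
  · have hF0z : F0 z = φ z.fst := if_pos ht
    rw [hF0z, hqφ] at hkq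
    have ha : max (ε / 2 - ‖z.fst‖) (-(ε / 2)) = -(k * z.snd) := congrArg WithLp.snd hkq
    have hb : (max 0 (ε - ‖z.fst‖)) • z.fst = -(k • z.fst) := congrArg WithLp.fst hkq
    have hc : (max 0 (ε - ‖z.fst‖) + k) • z.fst = 0 := by
      rw [add_smul, hb]; simp
    have hpos : 0 < max 0 (ε - ‖z.fst‖) + k := by
      have : 0 ≤ max 0 (ε - ‖z.fst‖) := le_max_left _ _
      linarith
    have h0 : z.fst = 0 := (smul_eq_zero.1 hc).resolve_left hpos.ne'
    rw [h0, norm_zero, max_eq_left (by linarith)] at ha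
    have := mul_nonneg hk.le ht
    linarith
  · have hF0z : F0 z = f z.fst := if_neg ht
    have hfst1 : ‖z.fst‖ ≤ 1 := (WithLp.norm_fst_le _ z).trans hz1.le
    have hqw : q (f z.fst) = w := by
      by_cases h : f z.fst ∈ range φ
      · obtain ⟨y, hy⟩ := h
        rw [← hy, hqφ]
        apply hQfar
        by_contra hlt
        have := hεb (show y ∈ ball (0:E) ε by simpa using hlt)
        exact this ⟨z.fst, by simpa using hfst1, hy.symm⟩
      · exact hqo _ h
    rw [hF0z, hqw] at hkq
    have ha : -(ε / 2) = -(k * z.snd) := congrArg WithLp.snd hkq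
    have := mul_pos hk (neg_pos.2 (not_le.1 ht))
    linarith

theorem locHalf_inj {n : ℕ} {hn : 1 ≤ n} {M : Type} [TopologicalSpace M]
    (hM : LocallyHalfSpace hn M) : ∀ x : M, ∃ U : Set M, x ∈ U ∧ IsOpen U ∧
      ∃ ψ : U → EuclideanSpace ℝ (Fin n), Continuous ψ ∧ Function.Injective ψ := by
  intro x
  obtain ⟨U, V, hx, hU, -, ⟨h⟩⟩ := hM x
  exact ⟨U, hx, hU, fun u => ((h u : HalfSpace hn) : EuclideanSpace ℝ (Fin n)),
    continuous_subtype_val.comp (continuous_subtype_val.comp h.continuous),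
    Subtype.val_injective.comp (Subtype.val_injective.comp h.injective)⟩

theorem cell_open {n : ℕ} {hn : 1 ≤ n} {M : Type} [TopologicalSpace M]
    (hM : LocallyHalfSpace hn M) {U : Set M} (e : U ≃ₜ EuclideanSpace ℝ (Fin n)) : IsOpen U := by
  have h := inv_dom_mfd (locHalf_inj hM) (fun y => (e.symm y : M))
    (continuous_subtype_val.comp e.symm.continuous)
    (Subtype.val_injective.comp e.symm.injective)
  have h2 : Set.range (fun y => (e.symm y : M)) = U := by
    ext x
    constructor
    · rintro ⟨y, rfl⟩; exact (e.symm y).2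
    · intro hx; exact ⟨e ⟨x, hx⟩, by simp⟩
  rwa [h2] at h

open Topology in
/-- A point of a Euclidean cell has a parametrised open cell around it inside any open set. -/
theorem mInt_of_open {n : ℕ} {M : Type} [TopologicalSpace M] {U W S : Set M} {x : M}
    (e : U ≃ₜ EuclideanSpace ℝ (Fin n)) (hU : IsOpen U) (hxU : x ∈ U) (hW : IsOpen W)
    (hxW : x ∈ W) (hWS : W ⊆ S) : x ∈ mInt n S := by
  let E := EuclideanSpace ℝ (Fin n)
  have hemb : IsOpenEmbedding (fun y : E => (e.symm y : M)) :=
    hU.isOpenEmbedding_subtypeVal.comp e.symm.isOpenEmbedding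
  have hO : IsOpen ((fun y : E => (e.symm y : M)) ⁻¹' W) := hW.preimage hemb.continuous
  obtain ⟨ρ, hρ, hb⟩ := Metric.isOpen_iff.1 hO (e ⟨x, hxU⟩) (by simpa using hxW)
  let p : E → E := OpenPartialHomeomorph.univBall (e ⟨x, hxU⟩) ρ
  have hp : IsOpenEmbedding p :=
    (OpenPartialHomeomorph.univBall (e ⟨x, hxU⟩) ρ).isOpenEmbedding (by simp)
  have hp0 : p 0 = e ⟨x, hxU⟩ := OpenPartialHomeomorph.univBall_apply_zero _ _
  have hpb : ∀ y, p y ∈ Metric.ball (e ⟨x, hxU⟩) ρ := by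
    intro y
    have h1 := (OpenPartialHomeomorph.univBall (e ⟨x, hxU⟩) ρ).map_source (x := y) (by simp)
    rwa [OpenPartialHomeomorph.univBall_target _ hρ] at h1
  have hj := hemb.comp hp
  refine ⟨hWS hxW, Set.range ((fun y : E => (e.symm y : M)) ∘ p), ⟨0, ?_⟩, ?_, ?_, ?_⟩
  · simp [hp0]
  · rintro _ ⟨y, rfl⟩
    exact hWS (hb (hpb y))
  · exact hj.isOpen_range.preimage continuous_subtype_val
  · exact ⟨hj.isEmbedding.toHomeomorph.symm⟩

theorem mInt_mono' {n : ℕ} {hn : 1 ≤ n} {M : Type} [TopologicalSpace M]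
    (hM : LocallyHalfSpace hn M) {S T : Set M} (h : S ⊆ T) : mInt n S ⊆ mInt n T := by
  rintro x ⟨hx, U, hxU, hUS, -, ⟨e⟩⟩
  exact ⟨h hx, U, hxU, hUS.trans h, (cell_open hM e).preimage continuous_subtype_val, ⟨e⟩⟩

open Set Metric Topology in
theorem mInt_ball {n : ℕ} {M : Type} [TopologicalSpace M] {A : Set M}
    (h : A ≃ₜ closedBall (0 : EuclideanSpace ℝ (Fin n)) 1) :
    (∀ y : A, (y : M) ∈ mInt n A ↔ ‖(h y : EuclideanSpace ℝ (Fin n))‖ < 1) ∧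
    Nonempty (mInt n A ≃ₜ EuclideanSpace ℝ (Fin n)) := by
  let E := EuclideanSpace ℝ (Fin n)
  let j : ball (0:E) 1 → M := fun y => (h.symm (inclusion ball_subset_closedBall y) : M)
  have hj : IsEmbedding j :=
    IsEmbedding.subtypeVal.comp (h.symm.isEmbedding.comp (IsEmbedding.inclusion _))
  have hjr : ∀ y : A, (y : M) ∈ range j ↔ ‖(h y : E)‖ < 1 := by
    intro y
    constructor
    · rintro ⟨z, hz⟩
      have h1 : h.symm (inclusion ball_subset_closedBall z) = y := Subtype.ext hz
      rw [← h1]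
      simp; exact mem_ball_zero_iff.1 z.2
    · intro hy
      refine ⟨⟨h y, by simpa using hy⟩, ?_⟩
      have : inclusion ball_subset_closedBall (⟨h y, by simpa using hy⟩ : ball (0:E) 1) = h y :=
        Subtype.ext rfl
      simp only [j, this, Homeomorph.symm_apply_apply]
  have eJ : range j ≃ₜ E := hj.toHomeomorph.symm.trans Homeomorph.unitBall.symm
  have hjA : range j ⊆ A := by
    rintro _ ⟨z, rfl⟩; exact (h.symm _).2
  have hiff : ∀ y : A, (y : M) ∈ mInt n A ↔ ‖(h y : E)‖ < 1 := by
    intro y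
    constructor
    · rintro ⟨-, U, hyU, hUA, -, ⟨e⟩⟩
      let k : E → E := fun z => (h (inclusion hUA (e.symm z)) : E)
      have hk : Continuous k := continuous_subtype_val.comp
        (h.continuous.comp ((continuous_inclusion hUA).comp e.symm.continuous))
      have hki : Function.Injective k := Subtype.val_injective.comp
        (h.injective.comp ((inclusion_injective hUA).comp e.symm.injective))
      have hop := inv_dom_mfd (E := E) (X := E) (fun x => ⟨univ, mem_univ _, isOpen_univ,
        Subtype.val, continuous_subtype_val, Subtype.val_injective⟩) k hk hki
      have hsub : range k ⊆ interior (closedBall (0:E) 1) := by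
        apply interior_maximal _ hop
        rintro _ ⟨z, rfl⟩
        exact (h _).2
      rw [interior_closedBall _ one_ne_zero] at hsub
      have hy : (h y : E) ∈ range k := ⟨e ⟨y, hyU⟩, by simp [k]⟩
      simpa using hsub hy
    · intro hy
      refine ⟨y.2, range j, (hjr y).2 hy, hjA, ?_, ⟨eJ⟩⟩
      have : (Subtype.val ⁻¹' range j : Set A) = {y : A | ‖(h y : E)‖ < 1} := by
        ext y; exact hjr y
      rw [this]
      exact isOpen_lt (continuous_subtype_val.comp h.continuous).norm continuous_const
  refine ⟨hiff, ?_⟩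
  have hEq : mInt n A = range j := by
    ext x
    constructor
    · intro hx
      exact (hjr ⟨x, hx.1⟩).2 ((hiff ⟨x, hx.1⟩).1 hx)
    · intro hx
      exact (hiff ⟨x, hjA hx⟩).2 ((hjr ⟨x, hjA hx⟩).1 hx)
  rw [hEq]
  exact ⟨eJ⟩

/-- Proposition 1.2.1: if a manifold with boundary splits into closed `n`-balls, then its
manifold interior splits into open `n`-cells. -/
theorem interior_of_closed_splitter_splits (n : ℕ) (hn : 1 ≤ n)
    (M : Type) [TopologicalSpace M] [T2Space M] (hM : LocallyHalfSpace hn M)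
    (A B C : Set M) (hAB : A ∪ B = Set.univ) (hABC : A ∩ B = C)
    (hA : Nonempty (↥A ≃ₜ ↥(Metric.closedBall (0 : EuclideanSpace ℝ (Fin n)) 1)))
    (hB : Nonempty (↥B ≃ₜ ↥(Metric.closedBall (0 : EuclideanSpace ℝ (Fin n)) 1)))
    (hC : Nonempty (↥C ≃ₜ ↥(Metric.closedBall (0 : EuclideanSpace ℝ (Fin n)) 1))) :
    mInt n (Set.univ : Set M) = mInt n A ∪ mInt n B ∧
    mInt n A ∩ mInt n B = mInt n C ∧
    Nonempty (↥(mInt n A) ≃ₜ EuclideanSpace ℝ (Fin n)) ∧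
    Nonempty (↥(mInt n B) ≃ₜ EuclideanSpace ℝ (Fin n)) ∧
    Nonempty (↥(mInt n C) ≃ₜ EuclideanSpace ℝ (Fin n)) := by
  subst hABC
  obtain ⟨a⟩ := hA
  obtain ⟨b⟩ := hB
  obtain ⟨c⟩ := hC
  have hcb : CompactSpace (Metric.closedBall (0 : EuclideanSpace ℝ (Fin n)) 1) :=
    isCompact_iff_compactSpace.1 (isCompact_closedBall _ _)
  have hclosed : ∀ S : Set M,
      (S ≃ₜ Metric.closedBall (0 : EuclideanSpace ℝ (Fin n)) 1) → IsClosed S := by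
    intro S s
    have : CompactSpace S := s.symm.compactSpace
    exact (isCompact_iff_compactSpace.2 this).isClosed
  have hAc := hclosed A a
  have hBc := hclosed B b
  obtain ⟨iA, jA⟩ := mInt_ball a
  obtain ⟨iB, jB⟩ := mInt_ball b
  obtain ⟨iC, jC⟩ := mInt_ball c
  have hCA : mInt n (A ∩ B) ⊆ mInt n A := mInt_mono' hM Set.inter_subset_left
  have hCB : mInt n (A ∩ B) ⊆ mInt n B := mInt_mono' hM Set.inter_subset_right
  refine ⟨Set.Subset.antisymm ?_ ?_, Set.Subset.antisymm ?_ ?_, jA, jB, jC⟩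
  · rintro x ⟨-, U, hxU, -, -, ⟨e⟩⟩
    have hU : IsOpen U := cell_open hM e
    by_contra hx
    have hx1 : x ∉ mInt n A := fun h => hx (Or.inl h)
    have hx2 : x ∉ mInt n B := fun h => hx (Or.inr h)
    have hcov : ∀ y, y ∈ A ∨ y ∈ B := fun y => by
      have : y ∈ A ∪ B := by rw [hAB]; trivial
      exact this
    have hxB : x ∈ B := by
      by_contra h
      exact hx1 (mInt_of_open e hU hxU hBc.isOpen_compl h fun y hy => (hcov y).resolve_right hy)
    have hxA : x ∈ A := by
      by_contra h
      exact hx2 (mInt_of_open e hU hxU hAc.isOpen_compl h fun y hy => (hcov y).resolve_left hy)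
    have hx3 : x ∉ mInt n (A ∩ B) := fun h => hx1 (hCA h)
    have key : ∀ T : Set M, {x}ᶜ ⊆ T → AExt T := by
      intro T hT
      refine AExt_union hAc hBc hAB (AExt_ball a ?_) (AExt_ball b ?_) (AExt_ball c ?_)
      · intro y hy
        exact hT fun h => hx1 (h ▸ (iA y).2 hy)
      · intro y hy
        exact hT fun h => hx2 (h ▸ (iB y).2 hy)
      · intro y hy
        exact hT fun h => hx3 (h ▸ (iC y).2 hy)
    let φ : EuclideanSpace ℝ (Fin n) → M := fun y => (e.symm (y + e ⟨x, hxU⟩) : M)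
    have hφ : Topology.IsOpenEmbedding φ :=
      hU.isOpenEmbedding_subtypeVal.comp
        (e.symm.isOpenEmbedding.comp (Homeomorph.addRight (e ⟨x, hxU⟩)).isOpenEmbedding)
    have hφ0 : φ 0 = x := by simp [φ]
    exact degree_contra φ hφ (key _ (Set.subset_univ _)) (key _ (by rw [hφ0]))
  · exact Set.union_subset (mInt_mono' hM (Set.subset_univ _)) (mInt_mono' hM (Set.subset_univ _))
  · rintro x ⟨⟨-, U, hxU, hUA, -, ⟨e⟩⟩, ⟨-, V, hxV, hVB, -, ⟨e'⟩⟩⟩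
    have hU : IsOpen U := cell_open hM e
    have hV : IsOpen V := cell_open hM e'
    exact mInt_of_open e hU hxU (hU.inter hV) ⟨hxU, hxV⟩ (Set.inter_subset_inter hUA hVB)
  · exact fun x hx => ⟨hCA hx, hCB hx⟩
end
end

section
/- Let n ≥ 1 and let M be an n-manifold with boundary. Suppose A, B, C : Set M satisfy A ∪ B = Set.univ and A ∩ B = C, and each of A, B, C (with the subspace topology) is homeomorphic to Bⁿ. Then Int(A) ∩ Int(B) = Int(C). -/
noncomputable section

section Brouwer
open MeasureTheory Set Metric

theorem det_one_add_smul_poly {E : Type} [NormedAddCommGroup E] [InnerProductSpace ℝ E]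
    [FiniteDimensional ℝ E] [MeasurableSpace E] [BorelSpace E]
    (A : E → (E →L[ℝ] E)) (K : Set E) (hK : IsCompact K) (hA : ContinuousOn A K) :
    ∃ p : Polynomial ℝ, ∀ t : ℝ,
      ∫ x in K, (ContinuousLinearMap.id ℝ E + t • A x).det = p.eval t := by
  classical
  let b := Module.finBasis ℝ E
  let N := Module.finrank ℝ E
  let a : E → Matrix (Fin N) (Fin N) ℝ := fun x => LinearMap.toMatrix b b (A x : E →ₗ[ℝ] E)
  have ha : ∀ i j, ContinuousOn (fun x => a x i j) K := by
    intro i j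
    have h1 : Continuous (fun L : E →L[ℝ] E => LinearMap.toMatrix b b (L : E →ₗ[ℝ] E) i j) := by
      have : (fun L : E →L[ℝ] E => LinearMap.toMatrix b b (L : E →ₗ[ℝ] E) i j) =
        fun L : E →L[ℝ] E => (LinearMap.toContinuousLinearMap (b.coord i)) (L (b j)) := by
        funext L
        simp [LinearMap.toMatrix_apply]
      rw [this]
      fun_prop
    exact h1.comp_continuousOn hA
  have hdet : ∀ t x, (ContinuousLinearMap.id ℝ E + t • A x).det =
      ∑ σ : Equiv.Perm (Fin N), ∑ S ∈ (Finset.univ : Finset (Fin N)).powerset,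
        ((Equiv.Perm.sign σ : ℤ) : ℝ) * (∏ i ∈ S, t * a x (σ i) i) *
          ∏ i ∈ Finset.univ \ S, (1 : Matrix (Fin N) (Fin N) ℝ) (σ i) i := by
    intro t x
    rw [ContinuousLinearMap.det, ← LinearMap.det_toMatrix b, Matrix.det_apply']
    refine Finset.sum_congr rfl fun σ _ => ?_
    have : ∀ i, LinearMap.toMatrix b b
        ((ContinuousLinearMap.id ℝ E + t • A x : E →L[ℝ] E) : E →ₗ[ℝ] E) (σ i) i =
        t * a x (σ i) i + (1 : Matrix (Fin N) (Fin N) ℝ) (σ i) i := by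
      intro i
      have h2 : ((ContinuousLinearMap.id ℝ E + t • A x : E →L[ℝ] E) : E →ₗ[ℝ] E) =
        LinearMap.id + t • (A x : E →ₗ[ℝ] E) := rfl
      rw [h2, map_add, map_smul, LinearMap.toMatrix_id]
      simp [a, add_comm]
    simp only [this]
    rw [Finset.prod_add, Finset.mul_sum]
    refine Finset.sum_congr rfl fun S _ => ?_
    ring
  let c : Equiv.Perm (Fin N) → Finset (Fin N) → E → ℝ := fun σ S x =>
    ((Equiv.Perm.sign σ : ℤ) : ℝ) * (∏ i ∈ S, a x (σ i) i) *
          ∏ i ∈ Finset.univ \ S, (1 : Matrix (Fin N) (Fin N) ℝ) (σ i) i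
  have hc : ∀ σ S, IntegrableOn (c σ S) K := by
    intro σ S
    apply ContinuousOn.integrableOn_compact hK
    apply ContinuousOn.mul
    · apply ContinuousOn.mul continuousOn_const
      exact continuousOn_finsetProd _ fun i _ => ha _ _
    · exact continuousOn_const
  refine ⟨∑ σ : Equiv.Perm (Fin N), ∑ S ∈ (Finset.univ : Finset (Fin N)).powerset,
    Polynomial.C (∫ x in K, c σ S x) * Polynomial.X ^ S.card, fun t => ?_⟩
  have : ∀ x, (ContinuousLinearMap.id ℝ E + t • A x).det =
      ∑ σ : Equiv.Perm (Fin N), ∑ S ∈ (Finset.univ : Finset (Fin N)).powerset,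
        c σ S x * t ^ S.card := by
    intro x
    rw [hdet]
    refine Finset.sum_congr rfl fun σ _ => Finset.sum_congr rfl fun S _ => ?_
    rw [Finset.prod_mul_distrib, Finset.prod_const]
    simp only [c]; ring
  simp only [this]
  rw [integral_finsetSum]
  · rw [Polynomial.eval_finsetSum]
    refine Finset.sum_congr rfl fun σ _ => ?_
    rw [integral_finsetSum]
    · rw [Polynomial.eval_finsetSum]
      refine Finset.sum_congr rfl fun S _ => ?_
      rw [integral_mul_const]; simp
    · intro S _
      exact (hc σ S).mul_const _
  · intro σ _
    exact integrable_finsetSum _ fun S _ => (hc σ S).mul_const _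

theorem no_retraction {E : Type} [NormedAddCommGroup E] [InnerProductSpace ℝ E]
    [FiniteDimensional ℝ E] (U : Set E) (hU : IsOpen U) (hBU : closedBall (0:E) 1 ⊆ U)
    (f : E → E) (hf : ContDiffOn ℝ 1 f U) (hf1 : ∀ x ∈ U, ‖f x‖ = 1)
    (hfs : ∀ x, ‖x‖ = 1 → f x = x) : False := by
  borelize E
  set B := closedBall (0:E) 1 with hB
  have hBc : IsCompact B := isCompact_closedBall _ _
  have hBconv : Convex ℝ B := convex_closedBall _ _
  let A : E → (E →L[ℝ] E) := fun x => fderiv ℝ f x - ContinuousLinearMap.id ℝ E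
  have hfd : ∀ x ∈ U, HasFDerivAt f (fderiv ℝ f x) x := fun x hx =>
    ((hf.differentiableOn (by norm_num)).differentiableAt (hU.mem_nhds hx)).hasFDerivAt
  have hA : ContinuousOn A B :=
    ((hf.continuousOn_fderiv_of_isOpen hU le_rfl).mono hBU).sub continuousOn_const
  obtain ⟨C, hC⟩ := hBc.exists_bound_of_continuousOn hA
  let K : NNReal := C.toNNReal
  have hCK : ∀ x ∈ B, ‖A x‖ ≤ K := fun x hx => (hC x hx).trans (Real.le_coe_toNNReal C)
  let G : E → E := fun x => f x - x
  have hGd : ∀ x ∈ B, HasFDerivAt G (A x) x := fun x hx =>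
    (hfd x (hBU hx)).sub (hasFDerivAt_id x)
  have hGL : LipschitzOnWith K G B :=
    hBconv.lipschitzOnWith_of_nnnorm_hasFDerivWithin_le
      (fun x hx => (hGd x hx).hasFDerivWithinAt) (fun x hx => hCK x hx)
  classical
  let g : E → E := fun x => if x ∈ B then G x else 0
  have hgin : ∀ x ∈ B, g x = G x := fun x hx => if_pos hx
  have hgout : ∀ x, x ∉ B → g x = 0 := fun x hx => if_neg hx
  have hmix : ∀ x ∈ B, ∀ y, y ∉ B → ‖G x‖ ≤ K * ‖x - y‖ := by
    intro x hx y hy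
    have hx' : ‖x‖ ≤ 1 := by simpa [hB] using hx
    have hy' : 1 ≤ ‖y‖ := by
      have : ¬ ‖y‖ ≤ 1 := by simpa [hB] using hy
      linarith
    obtain ⟨z, hz, hz1⟩ : ∃ z ∈ segment ℝ x y, ‖z‖ = 1 := by
      have := (convex_segment (𝕜 := ℝ) x y).isPreconnected.intermediate_value
        (left_mem_segment ℝ x y) (right_mem_segment ℝ x y) (continuous_norm.continuousOn)
      exact this ⟨hx', hy'⟩
    have hGz : G z = 0 := by simp [G, hfs z hz1]
    have hzB : z ∈ B := by simp [hB, hz1]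
    have h1 := hGL.norm_sub_le hx hzB
    rw [hGz, sub_zero] at h1
    refine h1.trans ?_
    gcongr
    rw [norm_sub_rev x z, norm_sub_rev x y]
    exact norm_sub_le_of_mem_segment hz
  have hgL : ∀ x y, ‖g x - g y‖ ≤ K * ‖x - y‖ := by
    intro x y
    by_cases hx : x ∈ B <;> by_cases hy : y ∈ B
    · rw [hgin x hx, hgin y hy]; exact hGL.norm_sub_le hx hy
    · rw [hgin x hx, hgout y hy, sub_zero]; exact hmix x hx y hy
    · rw [hgin y hy, hgout x hx, zero_sub, norm_neg, norm_sub_rev x y]; exact hmix y hy x hx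
    · rw [hgout x hx, hgout y hy]; simp; positivity
  obtain ⟨p, hp⟩ := det_one_add_smul_poly A B hBc hA
  have key : ∀ t : ℝ, 0 ≤ t → t * (K + 1) < 1 → p.eval t = (volume B).toReal := by
    intro t ht0 ht
    have htK : t * K < 1 := by nlinarith
    have ht1 : t ≤ 1 := by nlinarith [K.2, mul_nonneg ht0 K.2]
    let F : E → E := fun x => x + t • g x
    have hinj : Function.Injective F := by
      intro x y hxy
      have h1 : x - y = - (t • (g x - g y)) := by
        have : x + t • g x = y + t • g y := hxy
        have h0 : x = y + t • g y - t • g x := eq_sub_of_add_eq this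
        rw [smul_sub]
        nth_rewrite 1 [h0]
        abel
      have h2 : ‖x - y‖ ≤ t * K * ‖x - y‖ := by
        calc ‖x - y‖ = t * ‖g x - g y‖ := by
              conv_lhs => rw [h1]
              rw [norm_neg, norm_smul, Real.norm_of_nonneg ht0]
          _ ≤ t * (K * ‖x - y‖) := by gcongr; exact hgL x y
          _ = _ := by ring
      have h3 : ‖x - y‖ = 0 := by nlinarith [norm_nonneg (x - y)]
      exact sub_eq_zero.1 (norm_eq_zero.1 h3)
    have hsurj : Function.Surjective F := by
      intro y
      have hct : ContractingWith (Real.toNNReal (t * K)) (fun x => y - t • g x) := by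
        constructor
        · rw [← NNReal.coe_lt_coe, Real.coe_toNNReal _ (by positivity)]; exact_mod_cast htK
        · apply LipschitzWith.of_dist_le_mul
          intro a b
          rw [dist_eq_norm, dist_eq_norm, Real.coe_toNNReal _ (by positivity)]
          calc ‖y - t • g a - (y - t • g b)‖ = ‖t • (g a - g b)‖ := by
                rw [← norm_neg]; congr 1; rw [smul_sub]; abel
            _ = t * ‖g a - g b‖ := by rw [norm_smul, Real.norm_of_nonneg ht0]
            _ ≤ t * (K * ‖a - b‖) := by gcongr; exact hgL a b
            _ = _ := by ring
      have hfix := hct.fixedPoint_isFixedPt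
      refine ⟨hct.fixedPoint, ?_⟩
      have h4 : y - t • g hct.fixedPoint = hct.fixedPoint := hfix
      change hct.fixedPoint + t • g hct.fixedPoint = y
      rw [← sub_eq_iff_eq_add.1 h4]
    have himg : F '' B = B := by
      apply Subset.antisymm
      · rintro _ ⟨x, hx, rfl⟩
        have : F x = (1 - t) • x + t • f x := by
          simp only [F, hgin x hx, G, smul_sub, sub_smul, one_smul]; abel
        rw [this]
        exact hBconv hx (by simp [hB, hf1 x (hBU hx)]) (by linarith) ht0 (by ring)
      · intro y hy
        obtain ⟨x, hx⟩ := hsurj y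
        refine ⟨x, ?_, hx⟩
        by_contra hxB
        have : x = y := by simpa [F, hgout x hxB] using hx
        exact hxB (this ▸ hy)
    have hder : ∀ x ∈ B, HasFDerivWithinAt F (ContinuousLinearMap.id ℝ E + t • A x) B x := by
      intro x hx
      have h5 : HasFDerivWithinAt (fun x => x + t • G x)
          (ContinuousLinearMap.id ℝ E + t • A x) B x :=
        (hasFDerivWithinAt_id x B).add ((hGd x hx).hasFDerivWithinAt.const_smul t)
      exact h5.congr (fun y hy => by simp [F, hgin y hy]) (by simp [F, hgin x hx])
    have hcv := integral_image_eq_integral_abs_det_fderiv_smul volume hBc.measurableSet hder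
      (hinj.injOn) (fun _ => (1:ℝ))
    rw [himg] at hcv
    have hne : ∀ x ∈ B, ∀ s : ℝ, 0 ≤ s → s ≤ t →
        (ContinuousLinearMap.id ℝ E + s • A x).det ≠ 0 := by
      intro x hx s hs0 hst hdet
      obtain ⟨v, hv, hv0⟩ := Submodule.exists_mem_ne_zero_of_ne_bot
        (LinearMap.bot_lt_ker_of_det_eq_zero hdet).ne'
      have h6 : v + s • A x v = 0 := hv
      have h7 : ‖v‖ ≤ s * (K * ‖v‖) := by
        have : v = - (s • A x v) := eq_neg_of_add_eq_zero_left h6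
        calc ‖v‖ = s * ‖A x v‖ := by
              conv_lhs => rw [this]
              rw [norm_neg, norm_smul, Real.norm_of_nonneg hs0]
          _ ≤ s * (K * ‖v‖) := by gcongr; exact (A x).le_of_opNorm_le (hCK x hx) v
      have h8 : 0 < ‖v‖ := norm_pos_iff.2 hv0
      have h9 : s * K ≤ t * K := by gcongr
      nlinarith
    have hpos : ∀ x ∈ B, 0 < (ContinuousLinearMap.id ℝ E + t • A x).det := by
      intro x hx
      by_contra hneg
      push Not at hneg
      have hcont : Continuous fun s : ℝ => (ContinuousLinearMap.id ℝ E + s • A x).det :=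
        ContinuousLinearMap.continuous_det.comp (by fun_prop)
      have h0 : (ContinuousLinearMap.id ℝ E + (0:ℝ) • A x).det = 1 := by
        rw [zero_smul, add_zero]; simp [ContinuousLinearMap.det]
      have := intermediate_value_Icc' ht0 hcont.continuousOn
      obtain ⟨s, hs, hs0⟩ := this ⟨hneg, by rw [h0]; exact zero_le_one⟩
      exact hne x hx s hs.1 hs.2 hs0
    rw [← hp t]
    calc _ = ∫ x in B, |(ContinuousLinearMap.id ℝ E + t • A x).det| • (1:ℝ) := by
          apply setIntegral_congr_fun hBc.measurableSet
          intro x hx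
          simp [abs_of_pos (hpos x hx)]
      _ = ∫ x in B, (1:ℝ) := hcv.symm
      _ = _ := by simp [Measure.real]
  have hpC : p = Polynomial.C (volume B).toReal := by
    apply Polynomial.eq_of_infinite_eval_eq
    have : Icc (0:ℝ) (1 / (K + 2)) ⊆
        {x | Polynomial.eval x p = Polynomial.eval x (Polynomial.C (volume B).toReal)} := by
      intro t ht
      have hK2 : (0:ℝ) < K + 2 := by positivity
      have h1 : t * (K + 2) ≤ 1 := by
        have := ht.2
        rwa [le_div_iff₀ hK2] at this
      simp only [mem_ofPred_eq, Polynomial.eval_C]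
      rcases ht.1.eq_or_lt with h | h
      · exact key t ht.1 (by rw [← h]; simp)
      · exact key t ht.1 (by nlinarith)
    refine Infinite.mono this (Icc_infinite (by positivity))
  have hzero : p.eval 1 = 0 := by
    rw [← hp 1]
    apply setIntegral_eq_zero_of_forall_eq_zero
    intro x hx
    have h1 : ContinuousLinearMap.id ℝ E + (1:ℝ) • A x = fderiv ℝ f x := by simp [A]
    rw [h1]
    by_contra hdet
    have hd := hfd x (hBU hx)
    have hsq : HasFDerivAt (fun y => inner ℝ (f y) (f y)) _ x := hd.inner ℝ hd
    have hsq' : HasFDerivAt (fun y => inner ℝ (f y) (f y)) (0 : E →L[ℝ] ℝ) x := by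
      have : (fun y => inner ℝ (f y) (f y)) =ᶠ[nhds x] fun _ => (1:ℝ) := by
        filter_upwards [hU.mem_nhds (hBU hx)] with y hy
        rw [real_inner_self_eq_norm_sq, hf1 y hy]; norm_num
      exact (hasFDerivAt_const (1:ℝ) x).congr_of_eventuallyEq this
    have heq := hsq.unique hsq'
    have hbij : Function.Surjective (fderiv ℝ f x) := by
      have hu : IsUnit (LinearMap.det (fderiv ℝ f x : E →ₗ[ℝ] E)) := isUnit_iff_ne_zero.2 hdet
      intro y
      exact ⟨(LinearEquiv.ofIsUnitDet (f := (fderiv ℝ f x : E →ₗ[ℝ] E)) (v := Module.finBasis ℝ E)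
        (v' := Module.finBasis ℝ E) (by rw [LinearMap.det_toMatrix]; exact hu)).symm y,
        LinearEquiv.apply_symm_apply (LinearEquiv.ofIsUnitDet (f := (fderiv ℝ f x : E →ₗ[ℝ] E)) (v := Module.finBasis ℝ E)
        (v' := Module.finBasis ℝ E) (by rw [LinearMap.det_toMatrix]; exact hu)) y⟩
    obtain ⟨v, hv⟩ := hbij (f x)
    have h2 := congrArg (fun L => L v) heq
    simp [hv, hf1 x (hBU hx)] at h2
  have hvol : 0 < (volume B).toReal := by
    apply ENNReal.toReal_pos
    · exact (measure_closedBall_pos volume (0:E) one_pos).ne'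
    · exact hBc.measure_lt_top.ne
  rw [hpC, Polynomial.eval_C] at hzero
  exact hvol.ne' hzero
end Brouwer

section Brouwer2
open MeasureTheory Set Metric

theorem brouwer_smooth {E : Type} [NormedAddCommGroup E] [InnerProductSpace ℝ E]
    [FiniteDimensional ℝ E] (φ : E → E) (hφ : ContDiff ℝ 1 φ)
    (hB : ∀ x, ‖x‖ ≤ 1 → ‖φ x‖ ≤ 1) : ∃ x, ‖x‖ ≤ 1 ∧ φ x = x := by
  by_contra! hne
  let u : E → E := fun x => x - φ x
  let a : E → ℝ := fun x => inner ℝ x (u x)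
  let q : E → ℝ := fun x => inner ℝ (u x) (u x)
  let D : E → ℝ := fun x => a x ^ 2 + q x * (1 - inner ℝ x x)
  have hu : ContDiff ℝ 1 u := contDiff_id.sub hφ
  have ha : ContDiff ℝ 1 a := contDiff_id.inner ℝ hu
  have hq : ContDiff ℝ 1 q := hu.inner ℝ hu
  have hD : ContDiff ℝ 1 D := (ha.pow 2).add (hq.mul (contDiff_const.sub (contDiff_id.inner ℝ contDiff_id)))
  let U : Set E := {x | q x ≠ 0} ∩ {x | 0 < D x}
  have hUo : IsOpen U := (isOpen_ne_fun hq.continuous continuous_const).inter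
    (isOpen_lt continuous_const hD.continuous)
  let f : E → E := fun x => x + ((-a x + √(D x)) / q x) • u x
  have hsph : ∀ x, ‖x‖ = 1 → 0 < a x := by
    intro x hx
    have h1 : a x = 1 - inner ℝ x (φ x) := by
      simp only [a, u, inner_sub_right, real_inner_self_eq_norm_sq, hx]; norm_num
    have h2 : 0 < ‖x - φ x‖ := norm_pos_iff.2 (sub_ne_zero.2 (hne x hx.le).symm)
    have h3 := norm_sub_sq_real x (φ x)
    have h4 := hB x hx.le
    rw [hx] at h3
    have h5 := norm_nonneg (φ x)
    nlinarith
  refine no_retraction U hUo ?_ f ?_ ?_ ?_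
  · intro x hx
    have hx : ‖x‖ ≤ 1 := by simpa using hx
    have hq0 : 0 < q x := by
      simp only [q, real_inner_self_eq_norm_sq]
      have : 0 < ‖u x‖ := norm_pos_iff.2 (sub_ne_zero.2 (hne x hx).symm)
      positivity
    refine ⟨hq0.ne', ?_⟩
    change 0 < a x ^ 2 + q x * (1 - inner ℝ x x)
    rw [real_inner_self_eq_norm_sq]
    rcases hx.eq_or_lt with h | h
    · have := hsph x h
      rw [h]; norm_num; positivity
    · have : 0 < 1 - ‖x‖ ^ 2 := by nlinarith [norm_nonneg x]
      positivity
  · apply contDiff_id.contDiffOn.add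
    apply ContDiffOn.smul _ hu.contDiffOn
    apply ContDiffOn.div _ hq.contDiffOn (fun x hx => hx.1)
    exact ha.neg.contDiffOn.add (hD.contDiffOn.sqrt (fun x hx => (show 0 < D x from hx.2).ne'))
  · intro x hx
    have hq0 : q x ≠ 0 := hx.1
    have hD0 : 0 < D x := hx.2
    have hs : √(D x) ^ 2 = D x := Real.sq_sqrt hD0.le
    have h1 : ‖f x‖ ^ 2 = 1 := by
      rw [← real_inner_self_eq_norm_sq]
      have : inner ℝ (f x) (f x) = inner ℝ x x + 2 * ((-a x + √(D x)) / q x) * a x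
          + ((-a x + √(D x)) / q x) ^ 2 * q x := by
        simp only [f, inner_add_left, inner_add_right, inner_smul_left, inner_smul_right, a, q,
          real_inner_comm x (u x)]
        simp; ring
      rw [this]
      have hs' : √(D x) ^ 2 = a x ^ 2 + q x * (1 - inner ℝ x x) := hs
      field_simp
      linear_combination hs'
    have h2 := norm_nonneg (f x)
    nlinarith
  · intro x hx
    have h1 : D x = a x ^ 2 := by simp [D, hx]
    simp [f, h1, Real.sqrt_sq (hsph x hx).le]

theorem brouwer_cont {E : Type} [NormedAddCommGroup E] [InnerProductSpace ℝ E]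
    [FiniteDimensional ℝ E] (φ : E → E) (hφ : ContinuousOn φ (closedBall 0 1))
    (hB : ∀ x, ‖x‖ ≤ 1 → ‖φ x‖ ≤ 1) : ∃ x, ‖x‖ ≤ 1 ∧ φ x = x := by
  by_contra! hne
  have hBc : IsCompact (closedBall (0:E) 1) := isCompact_closedBall _ _
  obtain ⟨x0, hx0, hmin⟩ := hBc.exists_isMinOn ⟨0, by simp⟩ ((hφ.sub continuousOn_id).norm)
  have hδ : 0 < ‖φ x0 - x0‖ := norm_pos_iff.2 (sub_ne_zero.2 (hne x0 (by simpa using hx0)))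
  set δ := ‖φ x0 - x0‖ with hδd
  let ρ : E → E := fun x => (max 1 ‖x‖)⁻¹ • x
  have hmx : ∀ x : E, 0 < max 1 ‖x‖ := fun x => lt_max_of_lt_left one_pos
  have hρc : Continuous ρ :=
    ((continuous_const.max continuous_norm).inv₀ (fun x => (hmx x).ne')).smul continuous_id
  have hρB : ∀ x, ‖ρ x‖ ≤ 1 := by
    intro x
    rw [norm_smul, norm_inv, Real.norm_of_nonneg (hmx x).le, inv_mul_le_iff₀ (hmx x), mul_one]
    exact le_max_right _ _
  have hρi : ∀ x, ‖x‖ ≤ 1 → ρ x = x := by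
    intro x hx
    simp [ρ, max_eq_left hx]
  have hψ : Continuous (φ ∘ ρ) := hφ.comp_continuous hρc (fun x => by simpa using hρB x)
  obtain ⟨g, hg, hgd, -⟩ := hψ.exists_contDiff_approx 1 (ε := fun _ => δ / 2)
    continuous_const (fun _ => by positivity)
  have hgn : ∀ x, ‖g x‖ ≤ 1 + δ / 2 := by
    intro x
    have h1 := hgd x
    rw [dist_eq_norm] at h1
    have h2 : ‖(φ ∘ ρ) x‖ ≤ 1 := hB _ (hρB x)
    have h3 := norm_le_norm_add_norm_sub ((φ ∘ ρ) x) (g x)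
    rw [norm_sub_rev] at h3
    linarith
  have hpos : 0 < 1 + δ / 2 := by positivity
  obtain ⟨x, hx, hfix⟩ := brouwer_smooth (fun x => (1 + δ / 2)⁻¹ • g x)
    (contDiff_const.smul (by exact_mod_cast hg)) (by
      intro x _
      rw [norm_smul, norm_inv, Real.norm_of_nonneg hpos.le, inv_mul_le_iff₀ hpos, mul_one]
      exact hgn x)
  have hgx : g x = (1 + δ / 2) • x := by
    rw [← hfix, smul_inv_smul₀ hpos.ne', hfix]
  have h1 := hgd x
  rw [dist_eq_norm, Function.comp_apply, hρi x hx] at h1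
  have h2 : δ ≤ ‖φ x - x‖ := hmin (by simpa using hx)
  have h3 : ‖g x - x‖ ≤ δ / 2 := by
    rw [hgx, add_smul, one_smul, add_sub_cancel_left, norm_smul, Real.norm_of_nonneg (by positivity)]
    nlinarith
  have h4 : ‖φ x - x‖ ≤ ‖g x - φ x‖ + ‖g x - x‖ := by
    have : φ x - x = (g x - x) - (g x - φ x) := by abel
    rw [this, add_comm]; exact norm_sub_le _ _
  linarith

theorem zero_stable {E : Type} [NormedAddCommGroup E] [InnerProductSpace ℝ E]
    [FiniteDimensional ℝ E] (h : E → E) (hc : ContinuousOn h (closedBall 0 1))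
    (hB : ∀ x, ‖x‖ ≤ 1 → ‖h x - x‖ ≤ 1) : ∃ x, ‖x‖ ≤ 1 ∧ h x = 0 := by
  obtain ⟨x, hx, hfix⟩ := brouwer_cont (fun x => x - h x) (continuousOn_id.sub hc)
    (fun x hx => by rw [norm_sub_rev]; exact hB x hx)
  exact ⟨x, hx, by simpa using hfix⟩

theorem inv_domain_ball {E : Type} [NormedAddCommGroup E] [InnerProductSpace ℝ E]
    [FiniteDimensional ℝ E] (f : E → E) (hf : ContinuousOn f (closedBall 0 1))
    (hinj : InjOn f (closedBall 0 1)) : f '' (closedBall 0 1) ∈ nhds (f 0) := by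
  borelize E
  by_contra hno
  set B := closedBall (0:E) 1 with hBdef
  have hBc : IsCompact B := isCompact_closedBall _ _
  have h0B : (0:E) ∈ B := by simp [hBdef]
  have : CompactSpace B := isCompact_iff_compactSpace.1 hBc
  have hemb : Topology.IsClosedEmbedding (B.domRestrict f) :=
    (continuousOn_iff_continuous_domRestrict.1 hf).isClosedEmbedding (injOn_iff_injective.1 hinj)
  obtain ⟨G, hG⟩ := ContinuousMap.exists_extension' hemb (⟨Subtype.val, continuous_subtype_val⟩ : C(B, E))
  have hGf : ∀ x ∈ B, G (f x) = x := fun x hx => congrFun hG ⟨x, hx⟩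
  have hYc : IsCompact (f '' B) := hBc.image_of_continuousOn hf
  obtain ⟨η, hη, hηG⟩ := Metric.continuous_iff.1 G.continuous (f 0) (1/10) (by norm_num)
  rw [hGf 0 h0B] at hηG
  let ε := η / 3
  have hε : 0 < ε := by positivity
  obtain ⟨c, hc1, hc2⟩ : ∃ c, dist c (f 0) < ε ∧ c ∉ f '' B := by
    by_contra! hcon
    exact hno (Filter.mem_of_superset (ball_mem_nhds _ hε) (fun c hc => hcon c hc))
  have hclose : ∀ y, dist y c ≤ ε → ‖G y‖ < 1 / 10 := by
    intro y hy
    have : dist y (f 0) < η := by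
      have := dist_triangle y c (f 0)
      simp only [ε] at *
      linarith
    simpa using hηG y this
  have hS1 : IsCompact (f '' B \ ball c ε) := hYc.diff isOpen_ball
  obtain ⟨δ, hδ, hδG⟩ : ∃ δ > 0, ∀ y ∈ f '' B \ ball c ε, δ ≤ ‖G y‖ := by
    rcases (f '' B \ ball c ε).eq_empty_or_nonempty with he | hne
    · exact ⟨1, one_pos, by simp [he]⟩
    · obtain ⟨y, hy, hmin⟩ := hS1.exists_isMinOn hne G.continuous.norm.continuousOn
      refine ⟨‖G y‖, ?_, fun z hz => hmin hz⟩
      obtain ⟨⟨x, hx, rfl⟩, hyc⟩ := hy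
      rw [hGf x hx]
      refine norm_pos_iff.2 ?_
      rintro rfl
      exact hyc (by rw [mem_ball, dist_comm]; exact hc1)
  let m := min δ (1/10)
  have hm : 0 < m := lt_min hδ (by norm_num)
  have hmδ : m ≤ δ := min_le_left _ _
  have hm1 : m ≤ 1/10 := min_le_right _ _
  obtain ⟨P, hP, hPd, -⟩ := G.continuous.exists_contDiff_approx 1 (ε := fun _ => m / 2)
    continuous_const (fun _ => by positivity)
  have hPdiff : Differentiable ℝ P := hP.differentiable (by norm_num)
  have hz : volume (P '' sphere c ε) = 0 :=
    addHaar_image_eq_zero_of_differentiableOn_of_addHaar_eq_zero volume hPdiff.differentiableOn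
      (Measure.addHaar_sphere_of_ne_zero volume c hε.ne')
  obtain ⟨v, hv1, hv2⟩ : ∃ v, ‖v‖ < m / 2 ∧ v ∉ P '' sphere c ε := by
    by_contra! hcon
    have hsub : ball (0:E) (m/2) ⊆ P '' sphere c ε := fun v hv => hcon v (by simpa using hv)
    have := measure_mono (μ := volume) hsub
    rw [hz] at this
    exact absurd this (not_le.2 (measure_ball_pos volume 0 (by positivity)))
  let Q : E → E := fun y => P y - v
  have hQd : ∀ y, ‖Q y - G y‖ < m := by
    intro y
    have h1 := hPd y
    rw [dist_eq_norm] at h1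
    have : Q y - G y = (P y - G y) - v := by simp only [Q]; abel
    rw [this]
    have := norm_sub_le (P y - G y) v
    linarith
  have hQ2 : ∀ y ∈ sphere c ε, Q y ≠ 0 := by
    intro y hy h0
    exact hv2 ⟨y, hy, sub_eq_zero.1 h0⟩
  have hQ1 : ∀ y ∈ f '' B \ ball c ε, Q y ≠ 0 := by
    intro y hy h0
    have h1 := hQd y
    rw [h0, zero_sub, norm_neg] at h1
    have := hδG y hy
    linarith
  let Φ : E → E := fun y => c + (max (ε / ‖y - c‖) 1) • (y - c)
  have hΦc : ContinuousOn Φ (f '' B) := by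
    apply continuousOn_const.add
    apply ContinuousOn.smul _ (continuousOn_id.sub continuousOn_const)
    apply ContinuousOn.sup _ continuousOn_const
    apply continuousOn_const.div (continuousOn_id.sub continuousOn_const).norm
    intro y hy h0
    have : y = c := sub_eq_zero.1 (norm_eq_zero.1 h0)
    exact hc2 (this ▸ hy)
  have hcase1 : ∀ y, ε ≤ ‖y - c‖ → Φ y = y := by
    intro y hy
    have : ε / ‖y - c‖ ≤ 1 := div_le_one_of_le₀ hy (norm_nonneg _)
    simp [Φ, max_eq_right this]
  have hcase2 : ∀ y ∈ f '' B, ‖y - c‖ < ε → Φ y ∈ sphere c ε := by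
    intro y hyB hy
    have hpos : 0 < ‖y - c‖ := by
      refine norm_pos_iff.2 (sub_ne_zero.2 ?_)
      rintro rfl
      exact hc2 hyB
    have : 1 ≤ ε / ‖y - c‖ := by rw [le_div_iff₀ hpos]; linarith
    rw [mem_sphere, dist_eq_norm]
    simp only [Φ, max_eq_left this, add_sub_cancel_left]
    rw [norm_smul, Real.norm_of_nonneg (by positivity)]
    field_simp
  have hQc : Continuous Q := hPdiff.continuous.sub continuous_const
  obtain ⟨x, hx, hx0⟩ := zero_stable (fun x => Q (Φ (f x)))
    (hQc.comp_continuousOn (hΦc.comp hf (mapsTo_image f B))) (by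
      intro x hx
      have hxB : x ∈ B := by simpa [hBdef] using hx
      rcases le_or_gt ε ‖f x - c‖ with h | h
      · rw [hcase1 _ h]
        have := hQd (f x)
        rw [hGf x hxB] at this
        linarith
      · have h1 := hcase2 _ (mem_image_of_mem f hxB) h
        have h2 := hclose (Φ (f x)) (le_of_eq h1)
        have h3 := hclose (f x) (by rw [dist_eq_norm]; exact h.le)
        rw [hGf x hxB] at h3
        have h4 := hQd (Φ (f x))
        have h5 : Q (Φ (f x)) - x = (Q (Φ (f x)) - G (Φ (f x))) + (G (Φ (f x)) - x) := by abel
        rw [h5]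
        have h6 := norm_add_le (Q (Φ (f x)) - G (Φ (f x))) (G (Φ (f x)) - x)
        have h7 := norm_sub_le (G (Φ (f x))) x
        linarith)
  have hxB : x ∈ B := by simpa [hBdef] using hx
  rcases le_or_gt ε ‖f x - c‖ with h | h
  · have hx0 : Q (Φ (f x)) = 0 := hx0
    rw [hcase1 _ h] at hx0
    exact hQ1 _ ⟨mem_image_of_mem f hxB, by rw [mem_ball, dist_eq_norm]; exact not_lt.2 h⟩ hx0
  · exact hQ2 _ (hcase2 _ (mem_image_of_mem f hxB) h) hx0

theorem inv_domain {E : Type} [NormedAddCommGroup E] [InnerProductSpace ℝ E]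
    [FiniteDimensional ℝ E] (O : Set E) (hO : IsOpen O) (f : O → E) (hf : Continuous f)
    (hinj : Function.Injective f) : IsOpen (range f) := by
  classical
  rw [isOpen_iff_mem_nhds]
  rintro _ ⟨⟨x, hx⟩, rfl⟩
  obtain ⟨r, hr, hrO⟩ := Metric.nhds_basis_closedBall.mem_iff.1 (hO.mem_nhds hx)
  let F : E → E := fun z => if h : z ∈ O then f ⟨z, h⟩ else 0
  have hFc : ContinuousOn F O := by
    rw [continuousOn_iff_continuous_domRestrict]
    convert hf using 1
    funext z
    simp [F]
  have hFi : InjOn F O := by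
    intro a ha b hb hab
    simp only [F, ha, hb, dif_pos] at hab
    exact congrArg Subtype.val (hinj hab)
  have hmaps : MapsTo (fun z : E => x + r • z) (closedBall 0 1) O := by
    intro z hz
    apply hrO
    have : ‖z‖ ≤ 1 := by simpa using hz
    rw [mem_closedBall, dist_eq_norm, add_sub_cancel_left, norm_smul, Real.norm_of_nonneg hr.le]
    nlinarith
  have hmain := inv_domain_ball (fun z => F (x + r • z))
    (hFc.comp (by fun_prop) hmaps) (by
      apply hFi.comp _ hmaps
      intro a _ b _ hab
      exact smul_right_injective E hr.ne' (add_left_cancel hab))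
  have hFx : F (x + r • (0:E)) = f ⟨x, hx⟩ := by simp [F, hx]
  rw [hFx] at hmain
  refine Filter.mem_of_superset hmain ?_
  rintro _ ⟨z, hz, rfl⟩
  exact ⟨⟨_, hmaps hz⟩, by simp only [F]; rw [dif_pos (hmaps hz)]⟩

theorem range_isOpen_of_charts {E : Type} [NormedAddCommGroup E] [InnerProductSpace ℝ E]
    [FiniteDimensional ℝ E] {X : Type} [TopologicalSpace X] (i : E → X) (hi : Continuous i)
    (hinj : Function.Injective i)
    (hX : ∀ x : X, ∃ (W : Set X) (k : W → E), x ∈ W ∧ IsOpen W ∧ Continuous k ∧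
      Function.Injective k) : IsOpen (range i) := by
  rw [isOpen_iff_mem_nhds]
  rintro _ ⟨z, rfl⟩
  obtain ⟨W, k, hxW, hW, hk, hkinj⟩ := hX (i z)
  have hO : IsOpen (i ⁻¹' W) := hW.preimage hi
  let F : (i ⁻¹' W) → E := fun y => k ⟨i y.1, y.2⟩
  have hF : IsOpen (range F) := by
    apply inv_domain _ hO F
    · exact hk.comp (Continuous.subtype_mk (hi.comp continuous_subtype_val) _)
    · intro a b hab
      exact Subtype.ext (hinj (congrArg Subtype.val (hkinj hab)))
  have h1 : IsOpen (Subtype.val '' (k ⁻¹' (range F))) :=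
    hW.isOpenMap_subtype_val _ (hF.preimage hk)
  refine Filter.mem_of_superset (h1.mem_nhds ⟨⟨i z, hxW⟩, ⟨⟨z, hxW⟩, rfl⟩, rfl⟩) ?_
  rintro _ ⟨w, ⟨y, hy⟩, rfl⟩
  exact ⟨y.1, congrArg Subtype.val (hkinj hy)⟩

end Brouwer2

/-- Claim (1) in the proof of Proposition 1.2.1:
`Int(A) ∩ Int(B) = Int(C)` for a splitting `M = A ∪_C B` into closed `n`-balls. -/
theorem mInt_inter_eq (n : ℕ) (hn : 1 ≤ n)
    (M : Type) [TopologicalSpace M] [T2Space M] (hM : LocallyHalfSpace hn M)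
    (A B C : Set M) (hAB : A ∪ B = Set.univ) (hABC : A ∩ B = C)
    (hA : Nonempty (↥A ≃ₜ ↥(Metric.closedBall (0 : EuclideanSpace ℝ (Fin n)) 1)))
    (hB : Nonempty (↥B ≃ₜ ↥(Metric.closedBall (0 : EuclideanSpace ℝ (Fin n)) 1)))
    (hC : Nonempty (↥C ≃ₜ ↥(Metric.closedBall (0 : EuclideanSpace ℝ (Fin n)) 1))) :
    mInt n A ∩ mInt n B = mInt n C := by
  obtain ⟨hA⟩ := hA
  obtain ⟨hB⟩ := hB
  have hcharts : ∀ x : M, ∃ (W : Set M) (k : W → EuclideanSpace ℝ (Fin n)), x ∈ W ∧ IsOpen W ∧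
      Continuous k ∧ Function.Injective k := by
    intro x
    obtain ⟨W, V, hxW, hW, -, ⟨e⟩⟩ := hM x
    refine ⟨W, fun w => ((e w).1).1, hxW, hW, ?_, ?_⟩
    · exact continuous_subtype_val.comp (continuous_subtype_val.comp e.continuous)
    · exact Subtype.val_injective.comp (Subtype.val_injective.comp e.injective)
  have hsub : ∀ S : Set M, (S ≃ₜ Metric.closedBall (0 : EuclideanSpace ℝ (Fin n)) 1) → C ⊆ S →
      mInt n C ⊆ mInt n S := by
    rintro S hS hCS x ⟨hxC, U, hxU, hUC, -, ⟨e⟩⟩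
    refine ⟨hCS hxC, U, hxU, hUC.trans hCS, ?_, ⟨e⟩⟩
    let i : EuclideanSpace ℝ (Fin n) → S := fun z => ⟨(e.symm z).1, hCS (hUC (e.symm z).2)⟩
    have hopen : IsOpen (Set.range i) := by
      apply range_isOpen_of_charts i
      · exact (continuous_subtype_val.comp e.symm.continuous).subtype_mk _
      · intro a b hab
        have h1 : (i a).1 = (i b).1 := by rw [hab]
        exact e.symm.injective (Subtype.ext h1)
      · intro x
        refine ⟨Set.univ, fun w => (hS w.1).1, Set.mem_univ _, isOpen_univ, ?_, ?_⟩
        · exact continuous_subtype_val.comp (hS.continuous.comp continuous_subtype_val)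
        · exact Subtype.val_injective.comp (hS.injective.comp Subtype.val_injective)
    convert hopen using 1
    ext y
    constructor
    · intro hy
      exact ⟨e ⟨y.1, hy⟩, Subtype.ext (by simp [i])⟩
    · rintro ⟨z, rfl⟩
      exact (e.symm z).2
  have hUopen : ∀ U : Set M, (U ≃ₜ EuclideanSpace ℝ (Fin n)) → IsOpen U := by
    intro U e
    have := range_isOpen_of_charts (fun z => (e.symm z).1)
      (continuous_subtype_val.comp e.symm.continuous)
      (Subtype.val_injective.comp e.symm.injective) hcharts
    convert this using 1
    ext y
    constructor
    · intro hy
      exact ⟨e ⟨y, hy⟩, by simp⟩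
    · rintro ⟨z, rfl⟩
      exact (e.symm z).2
  apply Set.Subset.antisymm
  · rintro x ⟨⟨hxA, U, hxU, hUA, -, ⟨e⟩⟩, ⟨hxB, V, hxV, hVB, -, ⟨e'⟩⟩⟩
    have hVo := hUopen V e'
    have hic : Continuous (fun z => (e.symm z).1) :=
      continuous_subtype_val.comp e.symm.continuous
    have hmem : (fun z => (e.symm z).1) ⁻¹' V ∈ nhds (e ⟨x, hxU⟩) :=
      (hVo.preimage hic).mem_nhds (by simpa using hxV)
    obtain ⟨r, hr, hrV⟩ := Metric.mem_nhds_iff.1 hmem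
    let b := OpenPartialHomeomorph.univBall (e ⟨x, hxU⟩) r
    have hb : Topology.IsOpenEmbedding b := b.isOpenEmbedding
      (OpenPartialHomeomorph.univBall_source _ _)
    let j : EuclideanSpace ℝ (Fin n) → M := fun z => (e.symm (b z)).1
    have hj : Topology.IsEmbedding j :=
      Topology.IsEmbedding.subtypeVal.comp (e.symm.isEmbedding.comp hb.isEmbedding)
    have hjC : Set.range j ⊆ C := by
      rintro _ ⟨z, rfl⟩
      rw [← hABC]
      refine ⟨hUA (e.symm (b z)).2, hVB (hrV ?_)⟩
      rw [← OpenPartialHomeomorph.univBall_target (e ⟨x, hxU⟩) hr]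
      exact b.map_source (by simp [b])
    refine ⟨hABC ▸ ⟨hxA, hxB⟩, Set.range j, ⟨0, ?_⟩, hjC, ?_, ⟨hj.toHomeomorph.symm⟩⟩
    · simp [j, b]
    · exact (hUopen _ hj.toHomeomorph.symm).preimage continuous_subtype_val
  · exact Set.subset_inter (hsub A hA (hABC ▸ Set.inter_subset_left))
      (hsub B hB (hABC ▸ Set.inter_subset_right))
end
end

section
/- Let n ≥ 1 and let M be a Hausdorff topological space in which every point has an open neighborhood homeomorphic (as a subspace) to ℝⁿ. Let B : ℕ → Set M be a sequence of subsets such that each B i (with the subspace topology) is homeomorphic to the closed unit ball Metric.closedBall (0 : ℝⁿ) 1 and such that B i ⊆ interior (B (i+1)) (topological interior taken in M) for every i. Then the union ⋃ i, B i, with the subspace topology, is homeomorphic to ℝⁿ. -/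
open Set Metric MeasureTheory Polynomial in
theorem det_poly {E : Type*} [NormedAddCommGroup E] [InnerProductSpace ℝ E] [FiniteDimensional ℝ E]
    (A : E →L[ℝ] E) : ∃ P : ℝ[X], P.natDegree ≤ Module.finrank ℝ E ∧
      ∀ t : ℝ, P.eval t = (ContinuousLinearMap.id ℝ E + t • A).det := by
  classical
  let b := Module.finBasis ℝ E
  let m := LinearMap.toMatrix b b (A : E →ₗ[ℝ] E)
  refine ⟨Matrix.det ((X : ℝ[X]) • m.map C + (1 : Matrix _ _ ℝ).map C), ?_, ?_⟩
  · simpa using Polynomial.natDegree_det_X_add_C_le m 1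
  · intro t
    have h1 : (ContinuousLinearMap.id ℝ E + t • A).det
        = Matrix.det (LinearMap.toMatrix b b
          ((ContinuousLinearMap.id ℝ E + t • A : E →L[ℝ] E) : E →ₗ[ℝ] E)) := by
      rw [LinearMap.det_toMatrix]
    rw [h1, ← Polynomial.coe_evalRingHom, RingHom.map_det]
    congr 1
    have h2 : ((ContinuousLinearMap.id ℝ E + t • A : E →L[ℝ] E) : E →ₗ[ℝ] E)
        = LinearMap.id + t • (A : E →ₗ[ℝ] E) := rfl
    have h3 : LinearMap.toMatrix b b (LinearMap.id + t • (A : E →ₗ[ℝ] E)) = 1 + t • m := by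
      rw [map_add, map_smul, LinearMap.toMatrix_id]
    rw [h2, h3]
    ext i j
    simp [Matrix.map_apply, Matrix.one_apply, add_comm]
    split_ifs <;> simp [mul_comm]

open Set Metric in
theorem exists_inv_perturb {E : Type*} [NormedAddCommGroup E] [NormedSpace ℝ E] [CompleteSpace E]
    (w : E → E) (K : NNReal) (hw : LipschitzWith K w) (t : ℝ) (ht : 0 ≤ t) (htK : t * K < 1) :
    Function.Bijective (fun x => x + t • w x) := by
  have hlip : ∀ x y, ‖t • w x - t • w y‖ ≤ t * K * ‖x - y‖ := by
    intro x y
    rw [← smul_sub, norm_smul, Real.norm_of_nonneg ht, mul_assoc]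
    gcongr
    simpa [dist_eq_norm] using hw.dist_le_mul x y
  constructor
  · intro x y hxy
    have h := hlip x y
    simp only at hxy
    have h2 : t • w x - t • w y = -(x - y) := by
      rw [neg_sub, sub_eq_sub_iff_add_eq_add, add_comm, hxy, add_comm]
    rw [h2, norm_neg] at h
    have : ‖x - y‖ = 0 := by nlinarith [norm_nonneg (x - y)]
    exact sub_eq_zero.1 (norm_eq_zero.1 this)
  · intro y
    have hc : ContractingWith (Real.toNNReal (t * K)) (fun x => y - t • w x) := by
      constructor
      · rw [← NNReal.coe_lt_coe, Real.coe_toNNReal _ (by positivity)]; simpa using htK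
      · apply LipschitzWith.of_dist_le_mul
        intro a b
        rw [Real.coe_toNNReal _ (by positivity), dist_eq_norm, dist_eq_norm]
        have := hlip b a
        rw [norm_sub_rev b a] at this
        simpa using this
    have hfix := hc.fixedPoint_isFixedPt
    refine ⟨ContractingWith.fixedPoint _ hc, ?_⟩
    have h3 := hfix.eq
    simp only at h3 ⊢
    nth_rewrite 1 [← h3]
    simp

open Set Metric MeasureTheory Polynomial in
theorem det_pos_perturb {E : Type*} [NormedAddCommGroup E] [InnerProductSpace ℝ E]
    [FiniteDimensional ℝ E] (A : E →L[ℝ] E) (t : ℝ) (ht : 0 ≤ t) (h : t * ‖A‖ < 1) :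
    0 < (ContinuousLinearMap.id ℝ E + t • A).det := by
  by_contra hneg
  push Not at hneg
  have hcont : Continuous fun s : ℝ => (ContinuousLinearMap.id ℝ E + s • A).det :=
    ContinuousLinearMap.continuous_det.comp (by fun_prop)
  have h0 : (ContinuousLinearMap.id ℝ E + (0:ℝ) • A).det = 1 := by
    simp [ContinuousLinearMap.det]
  obtain ⟨s, hs, hs0⟩ := intermediate_value_Icc' ht hcont.continuousOn
    (show (0:ℝ) ∈ Icc _ _ from ⟨hneg, by simp only [h0]; norm_num⟩)
  have hbij := exists_inv_perturb (fun x => A x) ‖A‖₊ A.lipschitz s hs.1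
    (lt_of_le_of_lt (by simpa using mul_le_mul_of_nonneg_right hs.2 (norm_nonneg A)) h)
  have : LinearMap.ker ((ContinuousLinearMap.id ℝ E + s • A : E →L[ℝ] E) : E →ₗ[ℝ] E) ≠ ⊥ :=
    LinearMap.det_eq_zero_iff_ker_ne_bot.1 hs0
  exact this (LinearMap.ker_eq_bot.2 hbij.1)

open Set Metric MeasureTheory Polynomial in
theorem no_C1_retraction {E : Type*} [NormedAddCommGroup E] [InnerProductSpace ℝ E]
    [FiniteDimensional ℝ E] (f : E → E)
    (hf : ∀ x ∈ closedBall (0 : E) 1, ContDiffAt ℝ 1 f x)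
    (hS : ∀ x, ‖x‖ = 1 → f x = x) (hn : ∀ x ∈ closedBall (0 : E) 1, ‖f x‖ = 1) : False := by
  let _ : MeasurableSpace E := borel E
  have _ : BorelSpace E := ⟨rfl⟩
  set D := closedBall (0 : E) 1 with hD
  have hDc : IsCompact D := isCompact_closedBall _ _
  let u : E → E := fun x => f x - x
  have hu : ∀ x ∈ D, ContDiffAt ℝ 1 u x := fun x hx => (hf x hx).sub contDiffAt_id
  let A : E → E →L[ℝ] E := fun x => fderiv ℝ u x
  have hAc : ContinuousOn A D := fun x hx =>
    ((hu x hx).continuousAt_fderiv (by norm_num)).continuousWithinAt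
  have hAd : ∀ x ∈ D, HasFDerivAt u (A x) x := fun x hx =>
    ((hu x hx).differentiableAt (by norm_num)).hasFDerivAt
  obtain ⟨C0, hC0⟩ := hDc.exists_bound_of_continuousOn hAc
  let C : NNReal := Real.toNNReal C0
  have hC : ∀ x ∈ D, ‖A x‖ ≤ C := fun x hx => (hC0 x hx).trans (Real.le_coe_toNNReal _)
  have hLip : LipschitzOnWith C u D := by
    apply (convex_closedBall (0:E) 1).lipschitzOnWith_of_nnnorm_hasFDerivWithin_le
      (f' := A) (fun x hx => (hAd x hx).hasFDerivWithinAt)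
    intro x hx
    exact_mod_cast hC x hx
  have huS : ∀ x, ‖x‖ = 1 → u x = 0 := fun x hx => by simp [u, hS x hx]
  classical
  let w : E → E := fun x => if ‖x‖ ≤ 1 then u x else 0
  have key : ∀ x y : E, ‖x‖ ≤ 1 → 1 < ‖y‖ → ‖u x‖ ≤ C * ‖x - y‖ := by
    intro x y hx hy
    obtain ⟨z, hz, hxz⟩ : ∃ z : E, ‖z‖ = 1 ∧ ‖x - z‖ ≤ ‖y‖ - ‖x‖ := by
      by_cases hx0 : x = 0
      · refine ⟨‖y‖⁻¹ • y, ?_, ?_⟩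
        · rw [norm_smul, norm_inv, norm_norm, inv_mul_cancel₀ (by linarith)]
        · subst hx0
          rw [zero_sub, norm_neg, norm_smul, norm_inv, norm_norm, inv_mul_cancel₀ (by linarith)]
          simp; linarith
      · have hx1 : 0 < ‖x‖ := norm_pos_iff.2 hx0
        refine ⟨‖x‖⁻¹ • x, ?_, ?_⟩
        · rw [norm_smul, norm_inv, norm_norm, inv_mul_cancel₀ hx1.ne']
        · have : x - ‖x‖⁻¹ • x = (1 - ‖x‖⁻¹) • x := by rw [sub_smul, one_smul]
          have h1 : 1 ≤ ‖x‖⁻¹ := (one_le_inv₀ hx1).2 hx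
          rw [this, norm_smul, Real.norm_eq_abs, abs_of_nonpos (by linarith)]
          have : ‖x‖⁻¹ * ‖x‖ = 1 := inv_mul_cancel₀ hx1.ne'
          nlinarith
    have h1 := hLip.dist_le_mul x (by simpa [hD] using hx) z (by simp [hD, hz])
    rw [huS z hz, dist_zero_right, dist_eq_norm] at h1
    refine h1.trans ?_
    gcongr
    refine hxz.trans ?_
    rw [norm_sub_rev]
    exact norm_sub_norm_le y x
  have hw : LipschitzWith C w := by
    apply LipschitzWith.of_dist_le_mul
    intro x y
    by_cases hx : ‖x‖ ≤ 1 <;> by_cases hy : ‖y‖ ≤ 1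
    · simp only [w, hx, hy, if_true]
      exact hLip.dist_le_mul x (by simpa [hD] using hx) y (by simpa [hD] using hy)
    · simp only [w, hx, hy, if_true, if_false, dist_eq_norm, sub_zero]
      exact key x y hx (not_le.1 hy)
    · simp only [w, hx, hy, if_true, if_false, dist_eq_norm, zero_sub, norm_neg]
      rw [norm_sub_rev x y]
      exact key y x hy (not_le.1 hx)
    · simp only [w, hx, hy, if_false, dist_self]; positivity
  set V := ball (0 : E) 1 with hV
  have hVD : V ⊆ D := ball_subset_closedBall
  -- volume identity for small t
  have hvol : ∀ t : ℝ, 0 ≤ t → t < 1 → t * C < 1 →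
      ∫ x in V, (ContinuousLinearMap.id ℝ E + t • A x).det = volume.real V := by
    intro t ht0 ht1 htC
    let g : E → E := fun x => x + t • w x
    have hbij : Function.Bijective g := exists_inv_perturb w C hw t ht0 htC
    have hgV : g '' V = V := by
      apply Subset.antisymm
      · rintro _ ⟨x, hx, rfl⟩
        have hx1 : ‖x‖ < 1 := by simpa [hV] using hx
        have : g x = (1 - t) • x + t • f x := by
          simp only [g, w, hx1.le, if_true, u, smul_sub, sub_smul, one_smul]; abel
        have h2 : ‖g x‖ < 1 := by
          rw [this]
          refine (norm_add_le _ _).trans_lt ?_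
          rw [norm_smul, norm_smul, hn x (hVD hx), Real.norm_of_nonneg ht0,
            Real.norm_of_nonneg (by linarith)]
          nlinarith
        simpa [hV] using h2
      · intro y hy
        obtain ⟨x, rfl⟩ := hbij.2 y
        refine ⟨x, ?_, rfl⟩
        by_contra hx
        have hx1 : 1 ≤ ‖x‖ := by simpa [hV] using hx
        have : w x = 0 := by
          by_cases h : ‖x‖ ≤ 1
          · simp only [w, h, if_true]; exact huS x (le_antisymm h hx1)
          · simp only [w, h, if_false]
        have hgx : g x = x := by simp [g, this]
        change g x ∈ V at hy
        rw [hgx] at hy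
        exact hx hy
    have hder : ∀ x ∈ V, HasFDerivWithinAt g (ContinuousLinearMap.id ℝ E + t • A x) V x := by
      intro x hx
      have h1 : HasFDerivAt (fun x => x + t • u x) (ContinuousLinearMap.id ℝ E + t • A x) x :=
        (hasFDerivAt_id x).add ((hAd x (hVD hx)).const_smul t)
      refine HasFDerivWithinAt.congr' h1.hasFDerivWithinAt ?_ hx
      intro y hy
      have hy1 : ‖y‖ < 1 := by simpa [hV] using hy
      simp only [g, w, hy1.le, if_true]
    have h3 := integral_image_eq_integral_abs_det_fderiv_smul (volume : Measure E)
      measurableSet_ball hder hbij.1.injOn (fun _ => (1:ℝ))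
    rw [hgV] at h3
    simp only [smul_eq_mul, mul_one, integral_const, measureReal_restrict_apply_univ] at h3
    rw [h3]
    apply setIntegral_congr_fun measurableSet_ball
    intro x hx
    simp only
    rw [abs_of_pos]
    apply det_pos_perturb _ _ ht0
    refine lt_of_le_of_lt ?_ htC
    gcongr
    exact hC x (hVD hx)
  have hint : ∀ t : ℝ, IntegrableOn (fun x => (ContinuousLinearMap.id ℝ E + t • A x).det) V := by
    intro t
    refine IntegrableOn.mono_set (ContinuousOn.integrableOn_compact hDc ?_) hVD
    exact ContinuousLinearMap.continuous_det.comp_continuousOn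
      (continuousOn_const.add (hAc.const_smul t))
  -- interpolation
  let N := Module.finrank ℝ E
  let s := Finset.range (N + 1)
  let v : ℕ → ℝ := fun j => 1 / ((C + 1) * (j + 2))
  have hv0 : ∀ j, 0 ≤ v j := fun j => by positivity
  have hvC : ∀ j, v j * (C + 1) < 1 := by
    intro j
    have : v j * (C + 1) = 1 / (j + 2 : ℝ) := by
      simp only [v]; field_simp
    rw [this, div_lt_one (by positivity)]
    have : (0:ℝ) ≤ j := by positivity
    linarith
  have hC0' : (0:ℝ) ≤ C := C.2
  have hv1 : ∀ j, v j < 1 := fun j => by nlinarith [hvC j, hv0 j, mul_nonneg (hv0 j) hC0']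
  have hvC' : ∀ j, v j * C < 1 := fun j => by nlinarith [hvC j, hv0 j, mul_nonneg (hv0 j) hC0']
  have hvinj : Set.InjOn v s := by
    intro i _ j _ hij
    simp only [v] at hij
    have h1 : ((C:ℝ) + 1) * (i + 2) = (C + 1) * (j + 2) := by
      have := congrArg (fun z => z⁻¹) hij
      simpa using this
    have h2 := mul_left_cancel₀ (by positivity) h1
    have : (i:ℝ) = j := by linarith
    exact_mod_cast this
  have hinterp : ∀ x, (ContinuousLinearMap.id ℝ E + (1:ℝ) • A x).det =
      ∑ j ∈ s, (Lagrange.basis s v j).eval 1 *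
        (ContinuousLinearMap.id ℝ E + (v j) • A x).det := by
    intro x
    obtain ⟨P, hPd, hP⟩ := det_poly (A x)
    have hdeg : P.degree < s.card := by
      refine lt_of_le_of_lt degree_le_natDegree ?_
      simp only [s, Finset.card_range]
      exact_mod_cast Nat.lt_succ_of_le hPd
    have h1 := Lagrange.eq_interpolate hvinj hdeg
    rw [← hP 1]
    conv_lhs => rw [h1]
    rw [Lagrange.interpolate_apply, eval_finsetSum]
    refine Finset.sum_congr rfl fun j _ => ?_
    rw [eval_mul, eval_C, hP, mul_comm]
  have hfin : ∫ x in V, (ContinuousLinearMap.id ℝ E + (1:ℝ) • A x).det = volume.real V := by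
    simp_rw [hinterp]
    rw [integral_finsetSum _ (fun j _ => (hint (v j)).const_mul _)]
    simp_rw [integral_const_mul, hvol _ (hv0 _) (hv1 _) (hvC' _)]
    rw [← Finset.sum_mul, ← eval_finsetSum, Lagrange.sum_basis hvinj ⟨0, by simp [s]⟩]
    simp
  have hzero : ∫ x in V, (ContinuousLinearMap.id ℝ E + (1:ℝ) • A x).det = 0 := by
    rw [← integral_zero E ℝ (μ := volume.restrict V)]
    apply setIntegral_congr_fun measurableSet_ball
    intro x hx
    simp only
    by_contra hdet
    have hfd : HasFDerivAt f (ContinuousLinearMap.id ℝ E + (1:ℝ) • A x) x := by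
      have := (hasFDerivAt_id x).add ((hAd x (hVD hx)).const_smul (1:ℝ))
      convert! this using 1
      ext y
      simp [u]
    have h4 : HasFDerivAt (fun y => inner ℝ (f y) (f y)) _ x := hfd.inner ℝ hfd
    have h5 : (fun y => inner ℝ (f y) (f y)) =ᶠ[nhds x] fun _ => (1:ℝ) := by
      filter_upwards [isOpen_ball.mem_nhds hx] with y hy
      rw [real_inner_self_eq_norm_sq, hn y (hVD hy)]; norm_num
    have h6 := h4.unique ((hasFDerivAt_const (1:ℝ) x).congr_of_eventuallyEq h5)
    have hsurj : Function.Surjective (ContinuousLinearMap.id ℝ E + (1:ℝ) • A x) := by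
      have hk : LinearMap.ker ((ContinuousLinearMap.id ℝ E + (1:ℝ) • A x : E →L[ℝ] E) : E →ₗ[ℝ] E) = ⊥ := by
        by_contra hk
        exact hdet (LinearMap.det_eq_zero_iff_ker_ne_bot.2 hk)
      exact LinearMap.injective_iff_surjective.1 (LinearMap.ker_eq_bot.1 hk)
    obtain ⟨z, hz⟩ := hsurj (f x)
    have h7 := DFunLike.congr_fun h6 z
    simp [fderivInnerCLM_apply] at h7
    simp at hz
    rw [hz, real_inner_self_eq_norm_sq, hn x (hVD hx)] at h7
    norm_num at h7
  have hpos : 0 < volume.real V :=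
    ENNReal.toReal_pos (measure_ball_pos volume _ one_pos).ne' measure_ball_lt_top.ne
  linarith

open Set Metric in
theorem brouwer_C1 {E : Type*} [NormedAddCommGroup E] [InnerProductSpace ℝ E]
    [FiniteDimensional ℝ E] (p : E → E) (hp : ContDiff ℝ 1 p)
    (hpD : ∀ x ∈ closedBall (0 : E) 1, ‖p x‖ < 1)
    (hfix : ∀ x ∈ closedBall (0 : E) 1, p x ≠ x) : False := by
  let v : E → E := fun x => x - p x
  have hv : ContDiff ℝ 1 v := contDiff_id.sub hp
  have hv0 : ∀ x ∈ closedBall (0 : E) 1, v x ≠ 0 := fun x hx h =>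
    hfix x hx (sub_eq_zero.1 h).symm
  let b : E → ℝ := fun x => inner ℝ x (v x)
  have hb : ContDiff ℝ 1 b := contDiff_id.inner ℝ hv
  let q : E → ℝ := fun x => b x ^ 2 + ‖v x‖ ^ 2 * (1 - ‖x‖ ^ 2)
  have hq : ContDiff ℝ 1 q :=
    (hb.pow 2).add ((hv.norm_sq ℝ).mul (contDiff_const.sub (contDiff_id.norm_sq ℝ)))
  have hbS : ∀ x, ‖x‖ = 1 → 0 < b x := by
    intro x hx
    have h1 : inner ℝ x (p x) ≤ ‖x‖ * ‖p x‖ := real_inner_le_norm _ _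
    have h2 := hpD x (by simp [hx])
    simp only [b, v, inner_sub_right, real_inner_self_eq_norm_sq]
    rw [hx] at h1 ⊢
    linarith
  have hqpos : ∀ x ∈ closedBall (0 : E) 1, 0 < q x := by
    intro x hx
    have hx1 : ‖x‖ ≤ 1 := by simpa using hx
    rcases hx1.lt_or_eq with h | h
    · have h1 : 0 < ‖v x‖ := norm_pos_iff.2 (hv0 x hx)
      have h2 : 0 < 1 - ‖x‖ ^ 2 := by nlinarith [norm_nonneg x]
      have := sq_nonneg (b x)
      simp only [q]
      positivity
    · have := hbS x h
      simp only [q, h]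
      norm_num
      positivity
  let s : E → ℝ := fun x => (-b x + Real.sqrt (q x)) / ‖v x‖ ^ 2
  have hs : ∀ x ∈ closedBall (0 : E) 1, ContDiffAt ℝ 1 s x := by
    intro x hx
    refine ContDiffAt.div (hb.contDiffAt.neg.add (hq.contDiffAt.sqrt (hqpos x hx).ne'))
      (hv.norm_sq ℝ).contDiffAt ?_
    have : 0 < ‖v x‖ := norm_pos_iff.2 (hv0 x hx)
    positivity
  refine no_C1_retraction (fun x => x + s x • v x)
    (fun x hx => contDiffAt_id.add ((hs x hx).smul hv.contDiffAt)) ?_ ?_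
  · intro x hx
    have h1 := hbS x hx
    have : q x = b x ^ 2 := by simp [q, hx]
    have hs0 : s x = 0 := by
      simp only [s, this, Real.sqrt_sq h1.le]; simp
    simp [hs0]
  · intro x hx
    have hv1 : 0 < ‖v x‖ := norm_pos_iff.2 (hv0 x hx)
    have hsx : s x * ‖v x‖ ^ 2 = -b x + Real.sqrt (q x) := by
      simp only [s]; field_simp
    have hsq : Real.sqrt (q x) ^ 2 = q x := Real.sq_sqrt (hqpos x hx).le
    have h2 : ‖x + s x • v x‖ ^ 2 = ‖x‖ ^ 2 + 2 * (s x * b x) + s x ^ 2 * ‖v x‖ ^ 2 := by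
      rw [norm_add_sq_real, inner_smul_right, norm_smul, mul_pow, Real.norm_eq_abs, sq_abs]
    have h3 : ‖v x‖ ^ 2 * (‖x + s x • v x‖ ^ 2 - 1) = 0 := by
      have h4 : q x = b x ^ 2 + ‖v x‖ ^ 2 * (1 - ‖x‖ ^ 2) := rfl
      have h5 : (s x * ‖v x‖ ^ 2 + b x) ^ 2 = q x := by rw [hsx]; linear_combination hsq
      rw [h2]
      nlinarith
    have h6 : ‖x + s x • v x‖ ^ 2 = 1 := by
      rcases mul_eq_zero.1 h3 with h | h
      · exact absurd h (by positivity)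
      · linarith
    have h7 := norm_nonneg (x + s x • v x)
    show ‖x + s x • v x‖ = 1
    nlinarith

open Set Metric in
theorem brouwer_ball {E : Type} [NormedAddCommGroup E] [InnerProductSpace ℝ E]
    [FiniteDimensional ℝ E] (F0 : E → E) (hF0 : ContinuousOn F0 (closedBall (0 : E) 1))
    (hF0D : ∀ x ∈ closedBall (0 : E) 1, ‖F0 x‖ ≤ 1) :
    ∃ x ∈ closedBall (0 : E) 1, F0 x = x := by
  by_contra hno
  push Not at hno
  have hDc : IsCompact (closedBall (0 : E) 1) := isCompact_closedBall _ _
  obtain ⟨F, hF⟩ := ContinuousMap.exists_restrict_eq (Y := E) (s := closedBall (0 : E) 1)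
    isClosed_closedBall ⟨_, hF0.domRestrict⟩
  have hFeq : ∀ x ∈ closedBall (0 : E) 1, F x = F0 x := fun x hx =>
    DFunLike.congr_fun hF (⟨x, hx⟩ : closedBall (0 : E) 1)
  obtain ⟨μ, hμ, hμD⟩ := hDc.exists_forall_le' (f := fun x => ‖F x - x‖) (a := 0)
    (by fun_prop) (fun x hx => norm_pos_iff.2 (sub_ne_zero.2 (by rw [hFeq x hx]; exact hno x hx)))
  let ε := μ / 2
  have hε : 0 < ε := by positivity
  obtain ⟨p, hp, hpF, -⟩ := F.continuous.exists_contDiff_approx 1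
    (ε := fun _ => ε) continuous_const (fun _ => hε)
  have hpn : ∀ x ∈ closedBall (0 : E) 1, ‖p x‖ < 1 + ε := by
    intro x hx
    have h1 := hpF x
    rw [dist_eq_norm] at h1
    have h2 := hF0D x hx
    rw [← hFeq x hx] at h2
    have := norm_le_norm_add_norm_sub' (p x) (F x)
    linarith
  refine brouwer_C1 (fun x => (1 + ε)⁻¹ • p x) (contDiff_const.smul hp) ?_ ?_
  · intro x hx
    rw [norm_smul, norm_inv, Real.norm_of_nonneg (by positivity), inv_mul_lt_iff₀ (by positivity)]
    simpa using hpn x hx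
  · intro x hx hfx
    have h1 := hμD x hx
    have h2 := hpF x
    rw [dist_eq_norm] at h2
    have h3 : p x = (1 + ε) • x := by
      have hfx' : x = (1 + ε)⁻¹ • p x := hfx.symm
      conv_rhs => rw [hfx']
      rw [ smul_smul, mul_inv_cancel₀ (by positivity), one_smul]
    have h4 : F x - x = -(p x - F x) + ε • x := by
      rw [h3, add_smul, one_smul]; abel
    have h5 : ‖F x - x‖ ≤ ‖p x - F x‖ + ‖ε • x‖ := by
      rw [h4]; refine (norm_add_le _ _).trans ?_
      rw [norm_neg]
    rw [norm_smul, Real.norm_of_nonneg hε.le] at h5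
    have h6 : ‖x‖ ≤ 1 := by simpa using hx
    have : ε + ε = μ := by simp [ε]
    nlinarith

open Set Metric MeasureTheory in
theorem inv_domain_unit {E : Type} [NormedAddCommGroup E] [InnerProductSpace ℝ E]
    [FiniteDimensional ℝ E] (f : E → E) (hf : ContinuousOn f (closedBall (0 : E) 1))
    (hinj : InjOn f (closedBall (0 : E) 1)) :
    f 0 ∈ interior (f '' closedBall (0 : E) 1) := by
  let _ : MeasurableSpace E := borel E
  have _ : BorelSpace E := ⟨rfl⟩
  by_contra hnot
  set D := closedBall (0 : E) 1 with hD
  have hDc : IsCompact D := isCompact_closedBall _ _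
  have : CompactSpace D := isCompact_iff_compactSpace.1 hDc
  have h0D : (0 : E) ∈ D := by simp [hD]
  have hce : Topology.IsClosedEmbedding (D.domRestrict f) :=
    (hf.domRestrict).isClosedEmbedding (injOn_iff_injective.1 hinj)
  obtain ⟨G, hG⟩ := ContinuousMap.exists_extension' (Y := E) hce ⟨Subtype.val, continuous_subtype_val⟩
  have hGf : ∀ x ∈ D, G (f x) = x := fun x hx => congrFun hG (⟨x, hx⟩ : D)
  have hG0 : G (f 0) = 0 := hGf 0 h0D
  obtain ⟨ε2, hε2, hGε⟩ := Metric.continuousAt_iff.1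
    (G.continuous.continuousAt (x := f 0)) (1/10) (by norm_num)
  let ε := ε2 / 2
  have hε : 0 < ε := by positivity
  have hGε' : ∀ y, ‖y - f 0‖ < 2 * ε → ‖G y‖ < 1/10 := by
    intro y hy
    have := @hGε y (by
      have h2 : 2 * ε = ε2 := by simp only [ε]; ring
      rw [dist_eq_norm]; linarith)
    rwa [hG0, dist_zero_right] at this
  obtain ⟨c, hc, hcf⟩ : ∃ c, ‖f 0 - c‖ < ε ∧ c ∉ f '' D := by
    by_contra h
    push Not at h
    apply hnot
    rw [mem_interior_iff_mem_nhds]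
    refine Filter.mem_of_superset (ball_mem_nhds (f 0) hε) fun y hy => h y ?_
    rwa [mem_ball, dist_comm, dist_eq_norm] at hy
  have hfDc : IsCompact (f '' D) := hDc.image_of_continuousOn hf
  let S1 : Set E := f '' D ∩ {y | ε ≤ ‖y - c‖}
  have hS1 : IsCompact S1 := hfDc.inter_right
    (isClosed_le continuous_const (by fun_prop))
  obtain ⟨δ0, hδ0, hδS⟩ := hS1.exists_forall_le' (f := fun y => ‖G y‖) (a := 0) (by fun_prop) (by
    rintro _ ⟨⟨x, hx, rfl⟩, hy⟩
    rw [hGf x hx, norm_pos_iff]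
    rintro rfl
    exact absurd hc (not_lt.2 hy))
  let δ := min δ0 (1/10)
  have hδ : 0 < δ := lt_min hδ0 (by norm_num)
  have hδ1 : δ ≤ 1/10 := min_le_right _ _
  have hδ2 : δ ≤ δ0 := min_le_left _ _
  obtain ⟨p, hp, hpG, -⟩ := G.continuous.exists_contDiff_approx 1
    (ε := fun _ => δ / 2) continuous_const (fun _ => half_pos hδ)
  have hnull : volume (p '' sphere c ε) = 0 :=
    addHaar_image_eq_zero_of_differentiableOn_of_addHaar_eq_zero volume
      (hp.differentiable (by norm_num)).differentiableOn
      (Measure.addHaar_sphere_of_ne_zero volume c hε.ne')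
  obtain ⟨v, hv, hvp⟩ : ∃ v ∈ ball (0 : E) (δ / 2), v ∉ p '' sphere c ε := by
    by_contra h
    push Not at h
    have h1 : volume (ball (0 : E) (δ / 2)) ≤ 0 := hnull ▸ measure_mono h
    exact absurd h1 (not_le.2 (measure_ball_pos volume _ (half_pos hδ)))
  let q : E → E := fun y => p y - v
  have hqc : Continuous q := hp.continuous.sub continuous_const
  have hqG : ∀ y, ‖q y - G y‖ < δ := by
    intro y
    have h1 := hpG y
    rw [dist_eq_norm] at h1
    have h2 : ‖v‖ < δ / 2 := by simpa using hv
    have h3 : q y - G y = (p y - G y) - v := by simp only [q]; abel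
    rw [h3]
    have := norm_sub_le (p y - G y) v
    linarith
  let Φ : E → E := fun y => c + (max (ε / ‖y - c‖) 1) • (y - c)
  have hΦ1 : ∀ y, ε ≤ ‖y - c‖ → Φ y = y := by
    intro y hy
    have : ε / ‖y - c‖ ≤ 1 := (div_le_one (hε.trans_le hy)).2 hy
    simp [Φ, max_eq_right this]
  have hΦ2 : ∀ y, y ≠ c → ‖y - c‖ < ε → ‖Φ y - c‖ = ε := by
    intro y hyc hy
    have h0 : 0 < ‖y - c‖ := norm_pos_iff.2 (sub_ne_zero.2 hyc)
    have : 1 ≤ ε / ‖y - c‖ := (one_le_div h0).2 hy.le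
    simp only [Φ, max_eq_left this, add_sub_cancel_left]
    rw [norm_smul, Real.norm_of_nonneg (by positivity)]
    field_simp
  have hΦc : ContinuousOn Φ (f '' D) := by
    intro y hy
    have hyc : y ≠ c := fun h => hcf (h ▸ hy)
    have h0 : ‖y - c‖ ≠ 0 := norm_ne_zero_iff.2 (sub_ne_zero.2 hyc)
    apply ContinuousAt.continuousWithinAt
    have h1 : ContinuousAt (fun y => ε / ‖y - c‖) y :=
      continuousAt_const.div (by fun_prop) h0
    exact continuousAt_const.add ((h1.max continuousAt_const).smul
      (continuousAt_id.sub continuousAt_const))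
  obtain ⟨x, hx, hfx⟩ := brouwer_ball (fun x => x - q (Φ (f x)))
    (continuousOn_id.sub (hqc.comp_continuousOn (hΦc.comp hf (mapsTo_image f D)))) (by
      intro x hx
      have hyc : f x ≠ c := fun h => hcf ⟨x, hx, h⟩
      show ‖x - q (Φ (f x))‖ ≤ 1
      by_cases h : ε ≤ ‖f x - c‖
      · rw [hΦ1 _ h, norm_sub_rev]
        have := hqG (f x)
        rw [hGf x hx] at this
        linarith
      · push Not at h
        have h1 := hΦ2 _ hyc h
        have hc' : ‖c - f 0‖ < ε := by rwa [norm_sub_rev]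
        have h2 : ‖Φ (f x) - f 0‖ < 2 * ε := by
          have := norm_sub_le_norm_sub_add_norm_sub (Φ (f x)) c (f 0)
          linarith
        have h3 : ‖f x - f 0‖ < 2 * ε := by
          have := norm_sub_le_norm_sub_add_norm_sub (f x) c (f 0)
          linarith
        have h4 := hGε' _ h2
        have h5 := hGε' _ h3
        rw [hGf x hx] at h5
        have h6 := hqG (Φ (f x))
        have h7 := norm_le_norm_add_norm_sub' (q (Φ (f x))) (G (Φ (f x)))
        have h8 := norm_sub_le x (q (Φ (f x)))
        linarith)
  have hq0 : q (Φ (f x)) = 0 := by simpa using hfx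
  have hyc : f x ≠ c := fun h => hcf ⟨x, hx, h⟩
  by_cases h : ε ≤ ‖f x - c‖
  · rw [hΦ1 _ h] at hq0
    have h1 := hqG (f x)
    rw [hq0, zero_sub, norm_neg] at h1
    have h2 := hδS (f x) ⟨⟨x, hx, rfl⟩, h⟩
    linarith
  · push Not at h
    have h1 := hΦ2 _ hyc h
    exact hvp ⟨Φ (f x), by simpa [dist_eq_norm] using h1, sub_eq_zero.1 hq0⟩

open Set Metric in
theorem inv_domain_s3 {E : Type} [NormedAddCommGroup E] [InnerProductSpace ℝ E]
    [FiniteDimensional ℝ E] (f : E → E) (c : E) (r : ℝ) (hr : 0 < r)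
    (hf : ContinuousOn f (closedBall c r))
    (hinj : InjOn f (closedBall c r)) :
    f c ∈ interior (f '' closedBall c r) := by
  let a : E → E := fun x => c + r • x
  have ha : MapsTo a (closedBall 0 1) (closedBall c r) := by
    intro x hx
    have hx1 : ‖x‖ ≤ 1 := by simpa using hx
    simp only [a, mem_closedBall, dist_eq_norm, add_sub_cancel_left, norm_smul,
      Real.norm_of_nonneg hr.le]
    nlinarith
  have hai : Function.Injective a := by
    intro x y hxy
    simpa [a, hr.ne'] using hxy
  have h := inv_domain_unit (f ∘ a) (hf.comp (by fun_prop) ha) (hinj.comp hai.injOn ha)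
  have h0 : (f ∘ a) 0 = f c := by simp [a]
  rw [h0] at h
  refine interior_mono ?_ h
  rw [image_comp]
  exact image_mono ha.image_subset

open Set Metric in
theorem inv_domain_sub {E : Type} [NormedAddCommGroup E] [InnerProductSpace ℝ E]
    [FiniteDimensional ℝ E] (c : E) (r : ℝ) (hr : 0 < r) (f : closedBall c r → E)
    (hf : Continuous f) (hinj : Function.Injective f) :
    f ⟨c, mem_closedBall_self hr.le⟩ ∈ interior (range f) := by
  obtain ⟨F, hF⟩ := ContinuousMap.exists_restrict_eq (Y := E) (s := closedBall c r)
    isClosed_closedBall ⟨f, hf⟩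
  have hFeq : ∀ x : closedBall c r, F x = f x := fun x => DFunLike.congr_fun hF x
  have h := inv_domain_s3 F c r hr F.continuous.continuousOn (by
    intro x hx y hy hxy
    have := (hFeq ⟨x, hx⟩).symm.trans (hxy.trans (hFeq ⟨y, hy⟩))
    exact congrArg Subtype.val (hinj this))
  rw [hFeq ⟨c, mem_closedBall_self hr.le⟩] at h
  refine interior_mono ?_ h
  rintro _ ⟨x, hx, rfl⟩
  exact ⟨⟨x, hx⟩, (hFeq ⟨x, hx⟩).symm⟩

open Set Metric Topology in
theorem openEmbedding_of_injective {E : Type} [NormedAddCommGroup E] [InnerProductSpace ℝ E]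
    [FiniteDimensional ℝ E] {M : Type} [TopologicalSpace M]
    (hM : ∀ x : M, ∃ j : E → M, IsOpenEmbedding j ∧ x ∈ range j)
    (h : E → M) (hc : Continuous h) (hi : Function.Injective h) : IsOpenEmbedding h := by
  refine IsOpenEmbedding.of_continuous_injective_isOpenMap hc hi ?_
  rw [isOpenMap_iff_nhds_le]
  intro x s hs
  rw [Filter.mem_map] at hs
  obtain ⟨j, hj, ⟨z, hz⟩⟩ := hM (h x)
  have hU : h ⁻¹' s ∩ h ⁻¹' range j ∈ 𝓝 x :=
    Filter.inter_mem hs (hc.continuousAt.preimage_mem_nhds (hj.isOpen_range.mem_nhds ⟨z, hz⟩))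
  obtain ⟨r, hr, hrU⟩ := Metric.nhds_basis_closedBall.mem_iff.1 hU
  let κ : range j ≃ₜ E := hj.isEmbedding.toHomeomorph.symm
  have hκ : ∀ y : range j, j (κ y) = y := fun y =>
    congrArg Subtype.val (hj.isEmbedding.toHomeomorph.apply_symm_apply y)
  let f : closedBall x r → E := fun y => κ ⟨h y, (hrU y.2).2⟩
  have hf : Continuous f := κ.continuous.comp
    ((hc.comp continuous_subtype_val).subtype_mk _)
  have hfi : Function.Injective f := by
    intro y y' hyy
    have := κ.injective hyy
    exact Subtype.ext (hi (congrArg Subtype.val this))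
  have h1 := inv_domain_sub x r hr f hf hfi
  have h2 : j '' interior (range f) ∈ 𝓝 (h x) := by
    refine (hj.isOpenMap _ isOpen_interior).mem_nhds ⟨_, h1, ?_⟩
    exact hκ _
  refine Filter.mem_of_superset h2 ?_
  rintro _ ⟨y, hy, rfl⟩
  obtain ⟨w, rfl⟩ := interior_subset hy
  have h3 : j (f w) = h w := hκ _
  rw [h3]
  exact (hrU w.2).1

open Set Metric Topology in
theorem radial_homeo {E : Type} [NormedAddCommGroup E] [NormedSpace ℝ E]
    (t : ℝ ≃o ℝ) (h0 : t 0 = 0) :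
    ∃ ρ : E ≃ₜ E, ∀ x, ‖ρ x‖ = t ‖x‖ ∧ ρ x = (t ‖x‖ / ‖x‖) • x := by
  let R : (ℝ ≃o ℝ) → E → E := fun t x => (t ‖x‖ / ‖x‖) • x
  have hnorm : ∀ t : ℝ ≃o ℝ, t 0 = 0 → ∀ x, ‖R t x‖ = t ‖x‖ := by
    intro t h0 x
    by_cases hx : x = 0
    · simp [R, hx, h0]
    · have hx' : 0 < ‖x‖ := norm_pos_iff.2 hx
      have : 0 ≤ t ‖x‖ := h0 ▸ t.monotone hx'.le
      simp only [R]
      rw [norm_smul, Real.norm_of_nonneg (by positivity)]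
      field_simp
  have hinv : ∀ t : ℝ ≃o ℝ, t 0 = 0 → ∀ x, R t.symm (R t x) = x := by
    intro t h0 x
    by_cases hx : x = 0
    · simp [R, hx]
    · have hx' : 0 < ‖x‖ := norm_pos_iff.2 hx
      have ht : 0 < t ‖x‖ := h0 ▸ t.strictMono hx'
      have h1 : R t.symm (R t x) = (t.symm ‖R t x‖ / ‖R t x‖) • R t x := rfl
      rw [h1, hnorm t h0, t.symm_apply_apply]
      simp only [R]
      rw [smul_smul]
      have : ‖x‖ / t ‖x‖ * (t ‖x‖ / ‖x‖) = 1 := by field_simp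
      rw [this, one_smul]
  have hcont : ∀ t : ℝ ≃o ℝ, t 0 = 0 → Continuous (R t) := by
    intro t h0
    rw [continuous_iff_continuousAt]
    intro x
    by_cases hx : x = 0
    · subst hx
      have h1 : R t 0 = 0 := by simp [R]
      rw [ContinuousAt, h1, tendsto_zero_iff_norm_tendsto_zero]
      simp_rw [hnorm t h0]
      have : Continuous fun x : E => t ‖x‖ := t.continuous.comp continuous_norm
      simpa [h0] using this.tendsto 0
    · have hx' : ‖x‖ ≠ 0 := norm_ne_zero_iff.2 hx
      exact ((t.continuous.comp continuous_norm).continuousAt.div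
        continuous_norm.continuousAt hx').smul continuousAt_id
  have h0' : t.symm 0 = 0 := by rw [OrderIso.symm_apply_eq, h0]
  refine ⟨⟨⟨R t, R t.symm, hinv t h0, ?_⟩, hcont t h0, hcont t.symm h0'⟩, fun x => ⟨hnorm t h0 x, rfl⟩⟩
  intro x
  simpa using hinv t.symm h0' x

open Set Metric Topology in
theorem radial_push {E : Type} [NormedAddCommGroup E] [NormedSpace ℝ E]
    (e a b c : ℝ) (he : 0 ≤ e) (hea : e < a) (hab : a < b) (hbc : b < c) :
    ∃ ρ : E ≃ₜ E, (∀ x, ‖x‖ ≤ e → ρ x = x) ∧ (∀ x, c ≤ ‖x‖ → ρ x = x) ∧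
      ∀ x, ‖ρ x‖ ≤ b ↔ ‖x‖ ≤ a := by
  let k := (b - e) / (a - e)
  let l := (c - b) / (c - a)
  have hk1 : 1 < k := (one_lt_div (by linarith)).2 (by linarith)
  have hl0 : 0 < l := div_pos (by linarith) (by linarith)
  have hl1 : l < 1 := (div_lt_one (by linarith)).2 (by linarith)
  have hka : k * (a - e) = b - e := div_mul_cancel₀ _ (by linarith)
  have hla : l * (c - a) = c - b := div_mul_cancel₀ _ (by linarith)
  let T : ℝ → ℝ := fun s => max s (min (e + k * (s - e)) (c - l * (c - s)))
  have hTm : StrictMono T := by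
    intro x y hxy
    have h1 : k * (x - e) < k * (y - e) := by nlinarith
    have h2 : l * (c - y) < l * (c - x) := by nlinarith
    exact max_lt_max hxy (min_lt_min (by linarith) (by linarith))
  have hTe : ∀ s, s ≤ e → T s = s := by
    intro s hs
    refine max_eq_left ((min_le_left _ _).trans ?_)
    nlinarith
  have hTc' : ∀ s, c ≤ s → T s = s := by
    intro s hs
    refine max_eq_left ((min_le_right _ _).trans ?_)
    nlinarith
  have hTa : T a = b := by
    simp only [T, hka, hla]
    have h1 : e + (b - e) = b := by ring
    have h2 : c - (c - b) = b := by ring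
    rw [h1, h2, min_self, max_eq_right hab.le]
  have hTcont : Continuous T := by fun_prop
  have hsurj : Function.Surjective T := by
    intro y
    have h1 : T (min y e) ≤ y := by rw [hTe _ (min_le_right _ _)]; exact min_le_left _ _
    have h2 : y ≤ T (max y c) := by rw [hTc' _ (le_max_right _ _)]; exact le_max_left _ _
    obtain ⟨s, -, hs⟩ := intermediate_value_Icc
      ((min_le_left y e).trans (le_max_left y c)) hTcont.continuousOn
      (show y ∈ Icc _ _ from ⟨h1, h2⟩)
    exact ⟨s, hs⟩
  obtain ⟨ρ, hρ⟩ := radial_homeo (E := E) (hTm.orderIsoOfSurjective T hsurj) (hTe 0 he)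
  have hn : ∀ x, ‖ρ x‖ = T ‖x‖ := fun x => (hρ x).1
  have hid : ∀ x, T ‖x‖ = ‖x‖ → ρ x = x := by
    intro x hx
    have h1 : ρ x = (T ‖x‖ / ‖x‖) • x := (hρ x).2
    rw [h1, hx]
    by_cases h0 : x = 0
    · simp [h0]
    · rw [div_self (norm_ne_zero_iff.2 h0), one_smul]
  refine ⟨ρ, fun x hx => hid x (hTe _ hx), fun x hx => hid x (hTc' _ hx), fun x => ?_⟩
  rw [hn, ← hTa, hTm.le_iff_le]

open Set Metric Topology in
theorem extend_homeo {E : Type} [NormedAddCommGroup E] [NormedSpace ℝ E] [ProperSpace E]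
    {M : Type} [TopologicalSpace M] [T2Space M] (g : E → M) (hg : IsOpenEmbedding g)
    (ρ : E ≃ₜ E) (c : ℝ) (hρ : ∀ x, c ≤ ‖x‖ → ρ x = x) :
    ∃ Φ : M ≃ₜ M, (∀ x, Φ (g x) = g (ρ x)) ∧ ∀ y, y ∉ g '' closedBall 0 c → Φ y = y := by
  let T : (E ≃ₜ E) → M → M := fun ρ => Function.extend g (g ∘ ρ) id
  have hTg : ∀ ρ x, T ρ (g x) = g (ρ x) := fun ρ x => hg.injective.extend_apply _ _ _
  have hTn : ∀ ρ y, y ∉ range g → T ρ y = y := fun ρ y hy =>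
    Function.extend_apply' _ _ _ (by simpa using hy)
  have hTc : ∀ ρ : E ≃ₜ E, (∀ x, c ≤ ‖x‖ → ρ x = x) → ∀ y, y ∉ g '' closedBall 0 c → T ρ y = y := by
    intro ρ hρ y hy
    by_cases h : y ∈ range g
    · obtain ⟨x, rfl⟩ := h
      rw [hTg, hρ]
      by_contra hx
      exact hy ⟨x, by simpa using (not_le.1 hx).le, rfl⟩
    · exact hTn ρ y h
  have hcont : ∀ ρ : E ≃ₜ E, (∀ x, c ≤ ‖x‖ → ρ x = x) → Continuous (T ρ) := by
    intro ρ hρ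
    rw [continuous_iff_continuousAt]
    intro y
    by_cases h : y ∈ range g
    · obtain ⟨x, rfl⟩ := h
      rw [← hg.continuousAt_iff]
      have : T ρ ∘ g = g ∘ ρ := funext fun x => hTg ρ x
      rw [this]
      exact (hg.continuous.comp ρ.continuous).continuousAt
    · have hcl : IsClosed (g '' closedBall 0 c) :=
        ((isCompact_closedBall (0 : E) c).image hg.continuous).isClosed
      have hy : y ∈ (g '' closedBall 0 c)ᶜ := fun ⟨x, _, hx⟩ => h ⟨x, hx⟩
      refine (continuousAt_id (x := y)).congr ?_
      filter_upwards [hcl.isOpen_compl.mem_nhds hy] with z hz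
      exact (hTc ρ hρ z hz).symm
  have hinv : ∀ ρ : E ≃ₜ E, ∀ y, T ρ.symm (T ρ y) = y := by
    intro ρ y
    by_cases h : y ∈ range g
    · obtain ⟨x, rfl⟩ := h
      rw [hTg, hTg, ρ.symm_apply_apply]
    · rw [hTn ρ y h, hTn _ y h]
  have hρ' : ∀ x, c ≤ ‖x‖ → ρ.symm x = x := fun x hx => by
    rw [Homeomorph.symm_apply_eq, hρ x hx]
  exact ⟨⟨⟨T ρ, T ρ.symm, hinv ρ, fun y => by simpa using hinv ρ.symm y⟩,
    hcont ρ hρ, hcont ρ.symm hρ'⟩, hTg ρ, hTc ρ hρ⟩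

theorem homeo_fix_off {M : Type} [TopologicalSpace M] (Φ : M ≃ₜ M) (A : Set M)
    (h : ∀ y, y ∉ A → Φ y = y) :
    (∀ y, y ∉ A → Φ.symm y = y) ∧ (∀ y, y ∈ A → Φ y ∈ A) ∧ (∀ y, y ∈ A → Φ.symm y ∈ A) := by
  refine ⟨fun y hy => by rw [Homeomorph.symm_apply_eq, h y hy], fun y hy => ?_, fun y hy => ?_⟩
  · by_contra hn
    have := Φ.injective (h _ hn)
    exact hn (by rw [this]; exact hy)
  · by_contra hn
    have := h _ hn
    rw [Φ.apply_symm_apply] at this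
    exact hn (this ▸ hy)

open Set Metric Topology in
theorem brown_step {E : Type} [NormedAddCommGroup E] [NormedSpace ℝ E] [ProperSpace E]
    {M : Type} [TopologicalSpace M] [T2Space M] (g h0 : E → M) (hg : IsOpenEmbedding g)
    (hh0 : IsOpenEmbedding h0) (r : ℝ) (hr : 0 < r) (K : Set M) (hK : IsCompact K)
    (hKh : g '' closedBall 0 (r + 1) ∪ K ⊆ range h0) :
    ∃ Φ : M ≃ₜ M, (∀ x, ‖x‖ ≤ r → Φ (g x) = g x) ∧ K ⊆ (Φ ∘ g) '' closedBall 0 (r + 1) ∧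
      ∀ y, y ∉ range h0 → Φ y = y := by
  obtain ⟨h, hh, hrange, hhg⟩ : ∃ h : E → M, IsOpenEmbedding h ∧ range h = range h0 ∧ h 0 = g 0 := by
    obtain ⟨z, hz⟩ := hKh (Or.inl ⟨0, by simp; linarith, rfl⟩)
    refine ⟨h0 ∘ Homeomorph.addRight z, hh0.comp (Homeomorph.addRight z).isOpenEmbedding, ?_, ?_⟩
    · exact (Homeomorph.addRight z).surjective.range_comp h0
    · simpa using hz
  rw [← hrange] at hKh ⊢
  set A := g '' closedBall 0 (r + 1) with hA
  have hAc : IsCompact A := (isCompact_closedBall (0 : E) (r + 1)).image hg.continuous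
  -- choice of ε
  obtain ⟨ε, hε, hεA⟩ : ∃ ε > 0, ∀ x, ‖x‖ ≤ 2 * ε → h x ∈ A := by
    have h1 : g '' ball 0 (r + 1) ∈ 𝓝 (h 0) :=
      (hg.isOpenMap _ isOpen_ball).mem_nhds ⟨0, by simp; linarith, hhg.symm⟩
    obtain ⟨η, hη, hηs⟩ := Metric.nhds_basis_closedBall.mem_iff.1
      (hh.continuous.continuousAt.preimage_mem_nhds h1)
    refine ⟨η / 2, by positivity, fun x hx => ?_⟩
    have : x ∈ closedBall (0 : E) η := by simp; linarith
    exact image_mono ball_subset_closedBall (hηs this)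
  obtain ⟨δ, hδ, hδr, hδh⟩ : ∃ δ > 0, δ < r ∧ ∀ x, ‖x‖ ≤ δ → ∃ z, ‖z‖ ≤ ε ∧ h z = g x := by
    have h1 : h '' ball 0 ε ∈ 𝓝 (g 0) :=
      (hh.isOpenMap _ isOpen_ball).mem_nhds ⟨0, by simpa using hε, hhg⟩
    obtain ⟨η, hη, hηs⟩ := Metric.nhds_basis_closedBall.mem_iff.1
      (hg.continuous.continuousAt.preimage_mem_nhds h1)
    refine ⟨min η (r / 2), by positivity, (min_le_right _ _).trans_lt (by linarith), fun x hx => ?_⟩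
    have : x ∈ closedBall (0 : E) η := by
      simpa using hx.trans (min_le_left _ _)
    obtain ⟨z, hz, hzx⟩ := hηs this
    refine ⟨z, ?_, hzx⟩
    have : ‖z‖ < ε := by simpa using hz
    exact this.le
  obtain ⟨R, hR, hRK⟩ : ∃ R, 2 * ε < R ∧ ∀ y ∈ A ∪ K, ∃ z, ‖z‖ ≤ R ∧ h z = y := by
    have h1 : IsCompact (h ⁻¹' (A ∪ K)) :=
      hh.isInducing.isCompact_preimage' (hAc.union hK) hKh
    obtain ⟨R0, hR0⟩ := h1.isBounded.exists_norm_le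
    refine ⟨max R0 (2 * ε + 1), lt_of_lt_of_le (by linarith) (le_max_right _ _), fun y hy => ?_⟩
    obtain ⟨z, rfl⟩ := hKh hy
    exact ⟨z, (hR0 z hy).trans (le_max_left _ _), rfl⟩
  obtain ⟨ρ1, -, hρ1c, hρ1⟩ := radial_push (E := E) 0 δ r (r + 1) le_rfl hδ hδr (by linarith)
  obtain ⟨ρ2, hρ2e, hρ2c, hρ2⟩ := radial_push (E := E) ε (2 * ε) R (R + 1) hε.le (by linarith) hR
    (by linarith)
  obtain ⟨Ψ, hΨg, hΨf⟩ := extend_homeo g hg ρ1 (r + 1) hρ1c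
  obtain ⟨φ, hφh, hφf⟩ := extend_homeo h hh ρ2 (R + 1) hρ2c
  obtain ⟨hΨf', hΨA, hΨA'⟩ := homeo_fix_off Ψ A hΨf
  have hΨsg : ∀ x, Ψ.symm (g x) = g (ρ1.symm x) := fun x => by
    rw [Homeomorph.symm_apply_eq, hΨg, ρ1.apply_symm_apply]
  have hφsh : ∀ x, φ.symm (h x) = h (ρ2.symm x) := fun x => by
    rw [Homeomorph.symm_apply_eq, hφh, ρ2.apply_symm_apply]
  refine ⟨(Ψ.symm.trans φ).trans Ψ, ?_, ?_, ?_⟩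
  · intro x hx
    have h1 : ‖ρ1.symm x‖ ≤ δ := by rw [← hρ1, ρ1.apply_symm_apply]; exact hx
    obtain ⟨z, hz, hzx⟩ := hδh _ h1
    simp only [Homeomorph.trans_apply]
    rw [hΨsg, ← hzx, hφh, hρ2e z hz, hzx, ← hΨsg, Ψ.apply_symm_apply]
  · intro y hy
    have h1 : Ψ.symm y ∈ A ∪ K := by
      by_cases hyA : y ∈ A
      · exact Or.inl (hΨA' y hyA)
      · rw [hΨf' y hyA]; exact Or.inr hy
    obtain ⟨z, hz, hzy⟩ := hRK _ h1
    have h2 : ‖ρ2.symm z‖ ≤ 2 * ε := by rw [← hρ2, ρ2.apply_symm_apply]; exact hz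
    have h3 := hΨA _ (hεA _ h2)
    obtain ⟨w, hw, hwy⟩ := h3
    refine ⟨w, hw, ?_⟩
    simp only [Function.comp, Homeomorph.trans_apply]
    rw [hwy, Ψ.symm_apply_apply, hφh, ρ2.apply_symm_apply, hzy, Ψ.apply_symm_apply]
  · intro y hy
    have hyA : y ∉ A := fun hA => hy (hKh (Or.inl hA))
    simp only [Homeomorph.trans_apply]
    rw [hΨf' y hyA, hφf y (fun ⟨x, _, hx⟩ => hy ⟨x, hx⟩), hΨf y hyA]

open Set Metric Topology in
theorem brown_union {E : Type} [NormedAddCommGroup E] [NormedSpace ℝ E] [ProperSpace E]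
    {M : Type} [TopologicalSpace M] [T2Space M] (B : ℕ → Set M) (hB : ∀ i, IsCompact (B i))
    (g0 : E → M) (hg0 : IsOpenEmbedding g0) (hg0U : range g0 ⊆ ⋃ i, B i)
    (hcov : ∀ C : Set M, IsCompact C → C ⊆ ⋃ i, B i →
      ∃ h : E → M, IsOpenEmbedding h ∧ C ⊆ range h ∧ range h ⊆ ⋃ i, B i) :
    ∃ G : E → M, IsOpenEmbedding G ∧ range G = ⋃ i, B i := by
  set U := ⋃ i, B i with hU
  let S := {g : E → M // IsOpenEmbedding g ∧ range g ⊆ U}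
  have step : ∀ (k : ℕ) (g : S), ∃ g' : S, (∀ x, ‖x‖ ≤ k + 1 → g'.1 x = g.1 x) ∧
      B k ⊆ g'.1 '' closedBall 0 (k + 1 + 1) := by
    rintro k ⟨g, hg, hgU⟩
    obtain ⟨h, hh, hCh, hhU⟩ := hcov (g '' closedBall 0 ((k : ℝ) + 1 + 1) ∪ B k)
      (((isCompact_closedBall (0 : E) _).image hg.continuous).union (hB k))
      (union_subset ((image_subset_range _ _).trans hgU) (subset_iUnion B k))
    obtain ⟨Φ, h1, h2, h3⟩ := brown_step g h hg hh (k + 1) (by positivity) (B k) (hB k) hCh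
    obtain ⟨-, h4, -⟩ := homeo_fix_off Φ U (fun y hy => h3 y (fun hy' => hy (hhU hy')))
    refine ⟨⟨Φ ∘ g, Φ.isOpenEmbedding.comp hg, ?_⟩, h1, h2⟩
    rintro _ ⟨x, rfl⟩
    exact h4 _ (hgU ⟨x, rfl⟩)
  choose nxt hnxt1 hnxt2 using step
  let seq : ℕ → S := fun k => Nat.rec ⟨g0, hg0, hg0U⟩ (fun k g => nxt k g) k
  have hseq : ∀ k, seq (k + 1) = nxt k (seq k) := fun k => rfl
  have hstab : ∀ (k j : ℕ) (x : E), ‖x‖ ≤ k + 1 → (seq (k + j)).1 x = (seq k).1 x := by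
    intro k j x hx
    induction j with
    | zero => rfl
    | succ j ih =>
      rw [← ih, ← add_assoc, hseq, hnxt1]
      push_cast
      have : (0:ℝ) ≤ j := by positivity
      linarith
  let G : E → M := fun x => (seq ⌈‖x‖⌉₊).1 x
  have hG : ∀ (k : ℕ) x, ‖x‖ ≤ k + 1 → G x = (seq k).1 x := by
    intro k x hx
    have hc : ‖x‖ ≤ (⌈‖x‖⌉₊ : ℝ) + 1 := (Nat.le_ceil _).trans (by linarith)
    have h1 := hstab k ⌈‖x‖⌉₊ x hx
    have h2 := hstab ⌈‖x‖⌉₊ k x hc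
    rw [add_comm, h2] at h1
    exact h1
  have hGev : ∀ x, ∃ k, G =ᶠ[𝓝 x] (seq k).1 := by
    intro x
    obtain ⟨k, hk⟩ := exists_nat_gt ‖x‖
    refine ⟨k, ?_⟩
    filter_upwards [(isOpen_lt continuous_norm continuous_const).mem_nhds
      (show x ∈ {x | ‖x‖ < (k:ℝ)} from hk)] with y hy
    have hy' : ‖y‖ < (k:ℝ) := hy
    exact hG k y (by linarith)
  refine ⟨G, IsOpenEmbedding.of_continuous_injective_isOpenMap ?_ ?_ ?_, ?_⟩
  · rw [continuous_iff_continuousAt]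
    intro x
    obtain ⟨k, hk⟩ := hGev x
    exact (seq k).2.1.continuous.continuousAt.congr hk.symm
  · intro x y hxy
    obtain ⟨k, hk⟩ := exists_nat_gt (max ‖x‖ ‖y‖)
    have hx : ‖x‖ ≤ k + 1 := by linarith [le_max_left ‖x‖ ‖y‖]
    have hy : ‖y‖ ≤ k + 1 := by linarith [le_max_right ‖x‖ ‖y‖]
    rw [hG k x hx, hG k y hy] at hxy
    exact (seq k).2.1.injective hxy
  · rw [isOpenMap_iff_nhds_le]
    intro x
    obtain ⟨k, hk⟩ := hGev x
    rw [Filter.map_congr hk, hk.eq_of_nhds, (seq k).2.1.map_nhds_eq]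
  · apply Subset.antisymm
    · rintro _ ⟨x, rfl⟩
      exact (seq _).2.2 ⟨x, rfl⟩
    · refine iUnion_subset fun k y hy => ?_
      obtain ⟨x, hx, hxy⟩ := hnxt2 k (seq k) hy
      refine ⟨x, ?_⟩
      rw [hG (k + 1) x (by push_cast; simpa using hx), hseq, hxy]

open Set Metric Topology in
/-- Lemma 5.1.9: in an `n`-manifold, a union of closed `n`-balls `B 0 ⊆ int B 1 ⊆ B 1 ⊆ …`,
each contained in the topological interior of the next, is an open `n`-cell. -/
theorem nested_union_of_balls_is_open_cell (n : ℕ) (hn : 1 ≤ n)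
    (M : Type) [TopologicalSpace M] [T2Space M]
    (hM : ∀ x : M, ∃ U : Set M, x ∈ U ∧ IsOpen U ∧
      Nonempty (↥U ≃ₜ EuclideanSpace ℝ (Fin n)))
    (B : ℕ → Set M)
    (hB : ∀ i, Nonempty (↥(B i) ≃ₜ ↥(Metric.closedBall (0 : EuclideanSpace ℝ (Fin n)) 1)))
    (hnest : ∀ i, B i ⊆ interior (B (i + 1))) :
    Nonempty (↥(⋃ i, B i) ≃ₜ EuclideanSpace ℝ (Fin n)) := by
  let E := EuclideanSpace ℝ (Fin n)
  have hM' : ∀ x : M, ∃ j : E → M, IsOpenEmbedding j ∧ x ∈ range j := by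
    intro x
    obtain ⟨U, hxU, hU, ⟨κ⟩⟩ := hM x
    refine ⟨Subtype.val ∘ κ.symm, hU.isOpenEmbedding_subtypeVal.comp κ.symm.isOpenEmbedding,
      κ ⟨x, hxU⟩, by simp⟩
  have hBc : ∀ i, IsCompact (B i) := by
    intro i
    obtain ⟨φ⟩ := hB i
    have : CompactSpace (closedBall (0 : E) 1) :=
      isCompact_iff_compactSpace.1 (isCompact_closedBall _ _)
    exact isCompact_iff_compactSpace.2 φ.symm.compactSpace
  have hcell : ∀ i, ∃ h : E → M, IsOpenEmbedding h ∧ interior (B i) ⊆ range h ∧ range h ⊆ B i := by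
    intro i
    obtain ⟨φ⟩ := hB i
    let ι : ball (0 : E) 1 → closedBall (0 : E) 1 := inclusion ball_subset_closedBall
    have hι : Continuous ι := continuous_inclusion _
    let h : E → M := fun x => (φ.symm (ι (Homeomorph.unitBall x)) : M)
    refine ⟨h, openEmbedding_of_injective hM' h ?_ ?_, ?_, ?_⟩
    · exact continuous_subtype_val.comp (φ.symm.continuous.comp
        (hι.comp Homeomorph.unitBall.continuous))
    · intro x y hxy
      exact Homeomorph.unitBall.injective (inclusion_injective ball_subset_closedBall
        (φ.symm.injective (Subtype.ext hxy)))
    · intro y hy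
      have hyB : y ∈ B i := interior_subset hy
      have hlt : (φ ⟨y, hyB⟩ : E) ∈ ball (0 : E) 1 := by
        obtain ⟨j, hj, ⟨z, rfl⟩⟩ := hM' y
        obtain ⟨r, hr, hrB⟩ := Metric.nhds_basis_closedBall.mem_iff.1
          (hj.continuous.continuousAt.preimage_mem_nhds (isOpen_interior.mem_nhds hy))
        have h1 := inv_domain_sub z r hr
          (fun x => (φ ⟨j x, interior_subset (hrB x.2)⟩ : E))
          (continuous_subtype_val.comp (φ.continuous.comp
            ((hj.continuous.comp continuous_subtype_val).subtype_mk _)))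
          (by
            intro x x' hxx
            have := congrArg Subtype.val (φ.injective (Subtype.ext hxx))
            exact Subtype.ext (hj.injective this))
        rw [← interior_closedBall (0 : E) one_ne_zero]
        refine interior_mono ?_ h1
        rintro _ ⟨x, rfl⟩
        exact (φ _).2
      refine ⟨Homeomorph.unitBall.symm ⟨_, hlt⟩, ?_⟩
      simp only [h, Homeomorph.apply_symm_apply]
      have : ι ⟨_, hlt⟩ = φ ⟨y, hyB⟩ := rfl
      rw [this, φ.symm_apply_apply]
    · rintro _ ⟨x, rfl⟩
      exact (φ.symm _).2
  have hmono : Monotone B := monotone_nat_of_le_succ fun i => (hnest i).trans interior_subset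
  obtain ⟨g0, hg0, -, hg0B⟩ := hcell 0
  obtain ⟨G, hG, hGU⟩ := brown_union B hBc g0 hg0 (hg0B.trans (subset_iUnion B 0)) (by
    intro C hC hCU
    obtain ⟨i, hi⟩ := hC.elim_directed_cover (fun i => interior (B i)) (fun i => isOpen_interior)
      (hCU.trans (iUnion_subset fun i => (hnest i).trans
        (subset_iUnion (fun i => interior (B i)) (i + 1))))
      (Monotone.directed_le fun a b hab => interior_mono (hmono hab))
    obtain ⟨h, hh, h1, h2⟩ := hcell i
    exact ⟨h, hh, hi.trans h1, h2.trans (subset_iUnion B i)⟩)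
  exact ⟨((Homeomorph.setCongr hGU.symm).trans hG.isEmbedding.toHomeomorph.symm)⟩
end
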